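/- Assume μ ∉ M/2 + ℤ and ν = M − 2m. Let t⁰ be a solution of the Bethe ansatz equations for (z; μ; V[ν]), and let ỹ(X) = Π_{i=1}^{M−m}(X − t̃⁰_i) be the unique monic polynomial of degree M − m with (μ − ν/2)·y·ỹ + X·(y·ỹ′ − y′·ỹ) = (μ + ν/2)·Π_{s=1}^n (X − z_s)^{m_s}, where y(X) = Π_{i=1}^m(X − t⁰_i). Assume t̃⁰_1,…,t̃⁰_{M−m} are pairwise distinct and ỹ(z_s) ≠ 0 for all s. Then there is a nonzero constant c ∈ ℂ such that A(μ + ν/2 − 1)·ω(t⁰, z) = c·ω(t̃⁰, z), where ω(t⁰,z) ∈ V[ν] and ω(t̃⁰,z) ∈ V[−ν] are the Bethe vectors. -/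

import Mathlib

open Complex Finset

namespace Paper

noncomputable section

variable {n : ℕ}

/-- The index set of the natural basis of `V = V_{m 0} ⊗ ⋯ ⊗ V_{m (n-1)}`:
the basis vector `v_{i_1} ⊗ ⋯ ⊗ v_{i_n}` corresponds to the index `(i_1,…,i_n)`. -/
abbrev Idx (m : Fin n → ℕ) := ∀ s : Fin n, Fin (m s + 1)

/-- The tensor product `V = V_{m 0} ⊗ ⋯ ⊗ V_{m (n-1)}` realized concretely as the space of
ℂ-valued functions on the index set of its natural basis. -/
abbrev TV (m : Fin n → ℕ) := Idx m → ℂ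

/-- The linear operator `f ↦ (i ↦ c i * f (g i))`; all the basic operators below are of
this form. -/
def mulShift {ι : Type*} (c : ι → ℂ) (g : ι → ι) : Module.End ℂ (ι → ℂ) where
  toFun f i := c i * f (g i)
  map_add' f h := by funext i; simp [mul_add]
  map_smul' a f := by
    funext i
    simp only [Pi.smul_apply, smul_eq_mul, RingHom.id_apply]
    ring

variable (m : Fin n → ℕ)

/-- `e11` acting in the `s`-th tensor factor: `e11 · v_k = ((m-2k)/2) v_k`. -/
def E11 (s : Fin n) : Module.End ℂ (TV m) :=
  mulShift (fun idx => ((m s : ℂ) - 2 * ((idx s : ℕ) : ℂ)) / 2) id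

/-- `e22` acting in the `s`-th tensor factor: `e22 · v_k = -((m-2k)/2) v_k`. -/
def E22 (s : Fin n) : Module.End ℂ (TV m) :=
  mulShift (fun idx => -(((m s : ℂ) - 2 * ((idx s : ℕ) : ℂ)) / 2)) id

/-- `e21` acting in the `s`-th tensor factor: `e21 · v_k = (k+1) v_{k+1}`. -/
def E21 (s : Fin n) : Module.End ℂ (TV m) :=
  mulShift (fun idx => ((idx s : ℕ) : ℂ)) (fun idx => Function.update idx s (idx s - 1))

/-- `e12` acting in the `s`-th tensor factor: `e12 · v_k = (m-k+1) v_{k-1}`. -/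
def E12 (s : Fin n) : Module.End ℂ (TV m) :=
  mulShift (fun idx => (m s : ℂ) - ((idx s : ℕ) : ℂ)) (fun idx => Function.update idx s (idx s + 1))

/-- The diagonal action `e11 = Σ_s e11^{(s)}` on the tensor product. -/
def e11T : Module.End ℂ (TV m) := ∑ s, E11 m s
def e22T : Module.End ℂ (TV m) := ∑ s, E22 m s
def e21T : Module.End ℂ (TV m) := ∑ s, E21 m s
def e12T : Module.End ℂ (TV m) := ∑ s, E12 m s

/-- `v ∈ V[ν]`, i.e. `(e11 - e22) v = ν v`. -/
def inWt (ν : ℤ) (v : TV m) : Prop := (e11T m - e22T m) v = ((ν : ℤ) : ℂ) • v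

/-- The Weyl involution `σ`, acting by `σ v_k = (-1)^k v_{m-k}` in each factor. -/
def sigmaOp : Module.End ℂ (TV m) :=
  mulShift (fun idx => ∏ s, (-1 : ℂ) ^ (m s - (idx s : ℕ))) (fun idx s => (idx s).rev)

/-- The weight of a basis vector: `wt(i) = Σ_s (m_s - 2 i_s)`. -/
def wt (idx : Idx m) : ℤ := ∑ s, ((m s : ℤ) - 2 * ((idx s : ℕ) : ℤ))

/-- The operator `p(κ) = Σ_{k ≥ 0} e21^k e12^k (1/k!) Π_{j=0}^{k-1} (κ + e22 - e11 - j)^{-1}`.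
The operator `e22 - e11` is diagonal in the chosen basis with eigenvalue `-wt(idx)` on the
basis vector labelled by `idx`, so the (partial) inverses `(κ + e22 - e11 - j)^{-1}` are the
diagonal operators with entries `(κ - wt(idx) - j)⁻¹`.  The sum is finite on `V` since
`e12` is nilpotent:  `e12^k = 0` for `k > M = Σ_s m_s`. -/
def pOp (κ : ℂ) : Module.End ℂ (TV m) :=
  ∑ k ∈ Finset.range ((∑ s, m s) + 1),
    (e21T m) ^ k * (e12T m) ^ k *
      mulShift (fun idx => ((k.factorial : ℂ))⁻¹ *
        ∏ j ∈ Finset.range k, (κ - ((wt m idx : ℤ) : ℂ) - (j : ℂ))⁻¹) id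

/-- The operator `𝒜(κ) = σ ∘ p(κ)`. -/
def Aop (κ : ℂ) : Module.End ℂ (TV m) := sigmaOp m * pOp m κ

/-- `Ω₀^{(s,t)} = e11^{(s)} e11^{(t)} + e22^{(s)} e22^{(t)}`. -/
def Om0 (s t : Fin n) : Module.End ℂ (TV m) := E11 m s * E11 m t + E22 m s * E22 m t

/-- `Ω₁₂^{(s,t)} = e12^{(s)} e21^{(t)}`. -/
def Om12 (s t : Fin n) : Module.End ℂ (TV m) := E12 m s * E21 m t

/-- `Ω₂₁^{(s,t)} = e21^{(s)} e12^{(t)}`. -/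
def Om21 (s t : Fin n) : Module.End ℂ (TV m) := E21 m s * E12 m t

/-- The trigonometric r-matrix `r^{(s,t)}(x) = (Ω₊ x + Ω₋)/(x-1)` acting in the `s`-th and
`t`-th tensor factors, where `Ω₊ = ½Ω₀ + Ω₁₂` and `Ω₋ = ½Ω₀ + Ω₂₁`. -/
def rOp (s t : Fin n) (x : ℂ) : Module.End ℂ (TV m) :=
  (x - 1)⁻¹ • (x • ((2 : ℂ)⁻¹ • Om0 m s t + Om12 m s t) + ((2 : ℂ)⁻¹ • Om0 m s t + Om21 m s t))

/-- The trigonometric Gaudin operators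
`K_s(z,μ) = (μ/2)(e11-e22)^{(s)} + Σ_{t ≠ s} r^{(s,t)}(z_s/z_t)`. -/
def Kop (z : Fin n → ℂ) (μ : ℂ) (s : Fin n) : Module.End ℂ (TV m) :=
  (μ / 2) • (E11 m s - E22 m s) + ∑ t ∈ Finset.univ.erase s, rOp m s t (z s / z t)

/-- The matrix entry `M₁₁(x) = 2πi Σ_s (1-x/z_s)⁻¹ e11^{(s)} - πi e11`. -/
def M11 (z : Fin n → ℂ) (x : ℂ) : Module.End ℂ (TV m) :=
  (2 * (Real.pi : ℂ) * I) • (∑ s, (1 - x / z s)⁻¹ • E11 m s) - ((Real.pi : ℂ) * I) • e11T m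

/-- `M₁₂(x) = 2πi Σ_s (1-x/z_s)⁻¹ e21^{(s)} - 2πi e21`. -/
def M12 (z : Fin n → ℂ) (x : ℂ) : Module.End ℂ (TV m) :=
  (2 * (Real.pi : ℂ) * I) • (∑ s, (1 - x / z s)⁻¹ • E21 m s) -
    (2 * (Real.pi : ℂ) * I) • e21T m

/-- `M₂₁(x) = 2πi Σ_s (1-x/z_s)⁻¹ e12^{(s)}`. -/
def M21 (z : Fin n → ℂ) (x : ℂ) : Module.End ℂ (TV m) :=
  (2 * (Real.pi : ℂ) * I) • (∑ s, (1 - x / z s)⁻¹ • E12 m s)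

/-- `M₂₂(x) = 2πi Σ_s (1-x/z_s)⁻¹ e22^{(s)} - πi e22`. -/
def M22 (z : Fin n → ℂ) (x : ℂ) : Module.End ℂ (TV m) :=
  (2 * (Real.pi : ℂ) * I) • (∑ s, (1 - x / z s)⁻¹ • E22 m s) - ((Real.pi : ℂ) * I) • e22T m

/-- The derivative `(dM₂₂/dx)(x) = 2πi Σ_s z_s⁻¹ (1-x/z_s)⁻² e22^{(s)}`. -/
def M22d (z : Fin n → ℂ) (x : ℂ) : Module.End ℂ (TV m) :=
  (2 * (Real.pi : ℂ) * I) • (∑ s, ((z s)⁻¹ * ((1 - x / z s)⁻¹) ^ 2) • E22 m s)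

/-- The coefficient `D₂(x)` of the universal differential operator
`𝒟 = cdet [[∂_u - πiμ + M₁₁, M₁₂],[M₂₁, ∂_u + πiμ + M₂₂]] = ∂_u² + D₁(x) ∂_u + D₂(x)`
(where `x = e^{-2πiu}`, `∂_u = -2πi x ∂_x`), namely
`D₂(x) = (-πiμ + M₁₁(x)) ∘ (πiμ + M₂₂(x)) - 2πi x (dM₂₂/dx)(x) - M₂₁(x) ∘ M₁₂(x)`. -/
def D2 (z : Fin n → ℂ) (μ : ℂ) (x : ℂ) : Module.End ℂ (TV m) :=
  (-(((Real.pi : ℂ) * I * μ)) • (1 : Module.End ℂ (TV m)) + M11 m z x) *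
      ((((Real.pi : ℂ) * I * μ)) • (1 : Module.End ℂ (TV m)) + M22 m z x)
    - (2 * (Real.pi : ℂ) * I * x) • M22d m z x
    - M21 m z x * M12 m z x

/-- The Bethe ansatz equations for the triple `(z; μ; V[ν])`, `ν = M - 2m'`:  `t` is a tuple
of pairwise distinct complex numbers, each nonzero and distinct from every `z_s`, with
`(1 - μ + ν/2)/t_i + Σ_{j≠i} 2/(t_i - t_j) - Σ_s m_s/(t_i - z_s) = 0` for all `i`. -/
def BAE (z : Fin n → ℂ) (μ : ℂ) {m' : ℕ} (t : Fin m' → ℂ) : Prop :=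
  Function.Injective t ∧ (∀ i, t i ≠ 0) ∧ (∀ i s, t i ≠ z s) ∧
    ∀ i, (1 - μ + ((∑ s, (m s : ℂ)) - 2 * (m' : ℂ)) / 2) / t i
        + (∑ j ∈ Finset.univ.erase i, 2 / (t i - t j))
        - ∑ s, (m s : ℂ) / (t i - z s) = 0

/-- The partial sum `ℓ_1 + ⋯ + ℓ_{s-1}` (0-based). -/
def pref (ℓv : Idx m) (s : Fin n) : ℕ :=
  ∑ u ∈ Finset.univ.filter (fun u => u < s), (ℓv u : ℕ)

/-- Extension of a tuple `t : Fin m' → ℂ` to a function on `ℕ` (by zero). -/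
def extt {m' : ℕ} (t : Fin m' → ℂ) : ℕ → ℂ := fun i => if h : i < m' then t ⟨i, h⟩ else 0

/-- The coordinate `ω_ℓ(t,z) = Σ_{ρ ∈ S_{m'}} Π_{s=1}^n Π_{i=ℓ_1+⋯+ℓ_{s-1}+1}^{ℓ_1+⋯+ℓ_s}
(t_{ρ(i)} - z_s)⁻¹` of the weight function. -/
def omegaCoeff (z : Fin n → ℂ) {m' : ℕ} (t : Fin m' → ℂ) (ℓv : Idx m) : ℂ :=
  ∑ ρ : Equiv.Perm (Fin m'), ∏ s : Fin n,
    ∏ i ∈ Finset.Ico (pref m ℓv s) (pref m ℓv s + (ℓv s : ℕ)), (extt (t ∘ ρ) i - z s)⁻¹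

/-- The Bethe vector (weight function) `ω(t,z) = Σ_{ℓ ∈ C} ω_ℓ(t,z) v_ℓ ∈ V[M - 2m']`. -/
def betheVec (z : Fin n → ℂ) {m' : ℕ} (t : Fin m' → ℂ) : TV m :=
  fun ℓv => if (∑ s, ((ℓv s : ℕ))) = m' then omegaCoeff m z t ℓv else 0

/-- The eigenvalue `k_s(t,z,μ) = (m_s/2)[(μ - ν/2 + m_s/2) + Σ_{p≠s} m_p z_s/(z_s-z_p)
+ 2 Σ_i z_s/(t_i - z_s)]`, with `ν = M - 2m'`. -/
def kEig (z : Fin n → ℂ) (μ : ℂ) {m' : ℕ} (t : Fin m' → ℂ) (s : Fin n) : ℂ :=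
  ((m s : ℂ) / 2) * ((μ - ((∑ u, (m u : ℂ)) - 2 * (m' : ℂ)) / 2 + (m s : ℂ) / 2)
    + (∑ p ∈ Finset.univ.erase s, (m p : ℂ) * z s / (z s - z p))
    + 2 * ∑ i, z s / (t i - z s))

/-- The scalar eigenvalue function `E₂(x, t, z, μ)` of `D₂(x)` on the Bethe vector, i.e.
the coefficient of the fundamental differential operator `ℰ = ∂_u² + E₂(x)`. -/
def E2fun (z : Fin n → ℂ) (μ : ℂ) {m' : ℕ} (t : Fin m' → ℂ) (x : ℂ) : ℂ :=
  (2 * (Real.pi : ℂ) * I) ^ 2 *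
    (-(μ + ((∑ u, (m u : ℂ)) - 2 * (m' : ℂ)) / 2) ^ 2 / 4
      + ∑ s, (((m s : ℂ) * ((m s : ℂ) + 2) / 4 + kEig m z μ t s) / (1 - x / z s)
          - ((m s : ℂ) * ((m s : ℂ) + 2) / 4) / (1 - x / z s) ^ 2))



theorem borchardt {I : Type*} [Fintype I] [DecidableEq I] (t z : I → ℂ)
    (hz : Function.Injective z) (htz : ∀ i k, t i ≠ z k) :
    (Matrix.of fun i k => (t i - z k)⁻¹).det * (Matrix.of fun i k => (t i - z k)⁻¹).permanent
      = (Matrix.of fun i k => ((t i - z k)⁻¹) ^ 2).det := by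
  have key : ∀ π : Equiv.Perm I, π ≠ 1 →
      (Matrix.of fun i k => (t i - z k)⁻¹ * (t i - z (π k))⁻¹).det = 0 := by
    intro π hπ
    rw [← Matrix.exists_mulVec_eq_zero_iff]
    refine ⟨fun k => z k - z (π k), ?_, ?_⟩
    · intro h
      apply hπ
      ext k
      have := congrFun h k
      simp only [Pi.zero_apply, sub_eq_zero] at this
      simpa using (hz this).symm
    · ext i
      simp only [Matrix.mulVec, dotProduct, Matrix.of_apply, Pi.zero_apply]
      have : ∀ k, (t i - z k)⁻¹ * (t i - z (π k))⁻¹ * (z k - z (π k))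
          = (t i - z k)⁻¹ - (t i - z (π k))⁻¹ := by
        intro k
        have h1 := sub_ne_zero.2 (htz i k)
        have h2 := sub_ne_zero.2 (htz i (π k))
        field_simp
        ring
      simp only [this, Finset.sum_sub_distrib]
      rw [Equiv.sum_comp π (fun k => (t i - z k)⁻¹), sub_self]
  have h1 : (Matrix.of fun i k => (t i - z k)⁻¹).det
        * (Matrix.of fun i k => (t i - z k)⁻¹).permanent
      = ∑ π : Equiv.Perm I, (Matrix.of fun i k => (t i - z k)⁻¹ * (t i - z (π k))⁻¹).det := by
    rw [Matrix.det_apply', Matrix.permanent, Finset.sum_mul_sum]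
    simp only [Matrix.det_apply']
    rw [Finset.sum_comm (s := (Finset.univ : Finset (Equiv.Perm I)))
      (f := fun (π σ : Equiv.Perm I) => ((Equiv.Perm.sign σ : ℤ) : ℂ) *
        ∏ k, (Matrix.of fun i k => (t i - z k)⁻¹ * (t i - z (π k))⁻¹) (σ k) k)]
    refine Finset.sum_congr rfl fun σ _ => ?_
    rw [← Equiv.sum_comp ((Equiv.inv (Equiv.Perm I)).trans (Equiv.mulLeft σ))]
    refine Finset.sum_congr rfl fun π _ => ?_
    simp only [Matrix.of_apply, Finset.prod_mul_distrib]
    rw [mul_assoc]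
    congr 2
    rw [← Equiv.prod_comp π]
    simp
  rw [h1, Finset.sum_eq_single 1]
  · congr 1
    ext i k
    simp [sq]
  · intro π _ hπ
    exact key π hπ
  · simp

theorem cauchy_det_ne {I : Type*} [Fintype I] [DecidableEq I] (t z : I → ℂ)
    (hz : Function.Injective z) (ht : Function.Injective t) (htz : ∀ i k, t i ≠ z k) :
    (Matrix.of fun i k => (t i - z k)⁻¹).det ≠ 0 := by
  intro h
  rw [← Matrix.exists_mulVec_eq_zero_iff] at h
  obtain ⟨v, hv, h⟩ := h
  apply hv
  let N : Polynomial ℂ := ∑ k, Polynomial.C (v k) *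
    ∏ u ∈ Finset.univ.erase k, (Polynomial.X - Polynomial.C (z u))
  have hN : N = 0 := by
    refine Polynomial.eq_zero_of_degree_lt_of_eval_index_eq_zero (v := t) (s := Finset.univ)
      ht.injOn ?_ ?_
    · by_cases hI : Nonempty I
      · rw [Polynomial.degree_lt_iff_coeff_zero]
        intro d hd
        simp only [N, Polynomial.finsetSum_coeff, Polynomial.coeff_C_mul]
        refine Finset.sum_eq_zero fun k _ => ?_
        rw [Polynomial.coeff_eq_zero_of_natDegree_lt, mul_zero]
        rw [Polynomial.natDegree_prod_of_monic _ _ (fun u _ => Polynomial.monic_X_sub_C _)]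
        simp only [Polynomial.natDegree_X_sub_C, Finset.sum_const, smul_eq_mul, mul_one]
        exact lt_of_lt_of_le (Finset.card_erase_lt_of_mem (Finset.mem_univ k)) hd
      · have : IsEmpty I := not_nonempty_iff.1 hI
        simp [N]
    · intro i _
      have h2 := congrFun h i
      simp only [Matrix.mulVec, dotProduct, Matrix.of_apply, Pi.zero_apply] at h2
      have : N.eval (t i) = (∏ u, (t i - z u)) * ∑ k, (t i - z k)⁻¹ * v k := by
        simp only [N, Polynomial.eval_finsetSum, Polynomial.eval_mul, Polynomial.eval_C,
          Polynomial.eval_prod, Polynomial.eval_sub, Polynomial.eval_X, Finset.mul_sum]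
        refine Finset.sum_congr rfl fun k _ => ?_
        rw [← Finset.mul_prod_erase _ _ (Finset.mem_univ k)]
        have := sub_ne_zero.2 (htz i k)
        field_simp
      rw [this, h2, mul_zero]
  ext k
  have h3 : N.eval (z k) = v k * ∏ u ∈ Finset.univ.erase k, (z k - z u) := by
    simp only [N, Polynomial.eval_finsetSum, Polynomial.eval_mul, Polynomial.eval_C,
          Polynomial.eval_prod, Polynomial.eval_sub, Polynomial.eval_X]
    rw [Finset.sum_eq_single k]
    · intro l _ hl
      rw [Finset.prod_eq_zero (i := k), mul_zero]
      · simp [hl.symm]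
      · simp
    · simp
  rw [hN, Polynomial.eval_zero] at h3
  rcases mul_eq_zero.1 h3.symm with h4 | h4
  · exact h4
  · rw [Finset.prod_eq_zero_iff] at h4
    obtain ⟨u, hu, h5⟩ := h4
    exact absurd (hz (sub_eq_zero.1 h5)).symm (Finset.ne_of_mem_erase hu)

theorem plucker_dual {I J : Type*} [Fintype I] [DecidableEq I] [Fintype J] [DecidableEq J]
    (P : I → I ⊕ J → ℂ) (N : J → I ⊕ J → ℂ) (w : I ⊕ J → ℂ)
    (h : ∀ i j, ∑ c, w c * P i c * N j c = 0) (π : Equiv.Perm (I ⊕ J)) :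
    ((Equiv.Perm.sign π : ℤ) : ℂ) * ((Matrix.of fun i k => P i (π (Sum.inl k))).det *
        ∏ k, w (π (Sum.inl k))) * (Matrix.of fun j l => N j (Sum.inr l)).det
      = ((Matrix.of fun i k => P i (Sum.inl k)).det * ∏ k, w (Sum.inl k)) *
        (Matrix.of fun j l => N j (π (Sum.inr l))).det := by
  let X : Matrix (I ⊕ J) (I ⊕ J) ℂ := Matrix.fromBlocks
    (Matrix.of fun i k => P i (π (Sum.inl k)) * w (π (Sum.inl k)))
    (Matrix.of fun i l => P i (π (Sum.inr l)) * w (π (Sum.inr l))) 0 1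
  let Y0 : Matrix (I ⊕ J) (I ⊕ J) ℂ := Matrix.fromBlocks 1
    (Matrix.of fun k j => N j (Sum.inl k)) 0 (Matrix.of fun l j => N j (Sum.inr l))
  let Y : Matrix (I ⊕ J) (I ⊕ J) ℂ := Y0.submatrix π id
  have hX : X.det = (Matrix.of fun i k => P i (π (Sum.inl k))).det *
        ∏ k, w (π (Sum.inl k)) := by
    simp only [X, Matrix.det_fromBlocks_zero₂₁, Matrix.det_one, mul_one]
    have := Matrix.det_mul_row (fun k => w (π (Sum.inl k)))
      (Matrix.of fun i k => P i (π (Sum.inl k)))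
    rw [mul_comm, ← this]
    congr 1
    ext i k
    simp [mul_comm]
  have hY : Y.det = ((Equiv.Perm.sign π : ℤ) : ℂ) * (Matrix.of fun j l => N j (Sum.inr l)).det := by
    simp only [Y, Matrix.det_permute, Y0, Matrix.det_fromBlocks_zero₂₁, Matrix.det_one, one_mul]
    rw [← Matrix.det_transpose (Matrix.of fun j l => N j (Sum.inr l))]
    rfl
  have hY0 : ∀ j c, Y0 c (Sum.inr j) = N j c := by
    intro j c
    rcases c with c | c <;> simp [Y0]
  have hY1 : ∀ i c, Y0 c (Sum.inl i) = if c = Sum.inl i then 1 else 0 := by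
    intro j c
    rcases c with c | c <;> simp [Y0, Matrix.one_apply]
  have hX0 : ∀ i c, X (Sum.inl i) c = P i (π c) * w (π c) := by
    intro i c
    rcases c with c | c <;> simp [X]
  have hX1 : ∀ j c, X (Sum.inr j) c = if c = Sum.inr j then 1 else 0 := by
    intro i c
    rcases c with c | c <;> simp [X, Matrix.one_apply, eq_comm]
  have hXY : X * Y = Matrix.fromBlocks
      (Matrix.of fun i k => P i (Sum.inl k) * w (Sum.inl k)) 0
      (Matrix.of fun j k => Y0 (π (Sum.inr j)) (Sum.inl k))
      (Matrix.of fun l j => N j (π (Sum.inr l))) := by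
    ext r c
    rw [Matrix.mul_apply]
    rcases r with r | r
    · simp only [hX0, Y, Matrix.submatrix_apply, id]
      rw [Equiv.sum_comp π (fun x => P r x * w x * Y0 x c)]
      rcases c with c | c
      · simp [hY1]
      · simp only [hY0, Matrix.fromBlocks_apply₁₂, Matrix.zero_apply]
        rw [← h r c]
        exact Finset.sum_congr rfl fun x _ => by ring
    · simp only [hX1, Y, Matrix.submatrix_apply, id, ite_mul, one_mul, zero_mul]
      rw [Finset.sum_ite_eq']
      rcases c with c | c
      · simp
      · simp [hY0]
  have := congrArg Matrix.det hXY
  rw [Matrix.det_mul, hX, hY, Matrix.det_fromBlocks_zero₁₂] at this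
  have e1 : (Matrix.of fun i k => P i (Sum.inl k) * w (Sum.inl k)).det
      = (Matrix.of fun i k => P i (Sum.inl k)).det * ∏ k, w (Sum.inl k) := by
    have := Matrix.det_mul_row (fun k => w (Sum.inl k : I ⊕ J))
      (Matrix.of fun i k => P i (Sum.inl k))
    rw [mul_comm, ← this]
    congr 1
    ext i k
    simp [mul_comm]
  have e2 : (Matrix.of fun l j => N j (π (Sum.inr l))).det
      = (Matrix.of fun j l => N j (π (Sum.inr l))).det := by
    rw [← Matrix.det_transpose]; rfl
  rw [e1, e2] at this
  rw [← this]
  ring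

/-- The monic polynomial with prescribed roots. -/
def rootPoly {I : Type*} [Fintype I] (t : I → ℂ) : Polynomial ℂ :=
  ∏ i, (Polynomial.X - Polynomial.C (t i))

/-- The twisted Wronskian. -/
def wrA (α : ℂ) (f g : Polynomial ℂ) : Polynomial ℂ :=
  Polynomial.C α * (f * g) +
    Polynomial.X * (f * Polynomial.derivative g - Polynomial.derivative f * g)

theorem rootPoly_erase {I : Type*} [Fintype I] [DecidableEq I] (t : I → ℂ) (i : I) :
    rootPoly t = (Polynomial.X - Polynomial.C (t i)) *
      ∏ k ∈ univ.erase i, (Polynomial.X - Polynomial.C (t k)) := by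
  exact (Finset.mul_prod_erase univ (fun k => Polynomial.X - Polynomial.C (t k))
    (Finset.mem_univ i)).symm

theorem rootPoly_eval {I : Type*} [Fintype I] (t : I → ℂ) (x : ℂ) :
    (rootPoly t).eval x = ∏ i, (x - t i) := by
  simp [rootPoly, Polynomial.eval_prod]

theorem natDegree_erase {I : Type*} [Fintype I] [DecidableEq I] (t : I → ℂ) (i : I) :
    (∏ k ∈ univ.erase i, (Polynomial.X - Polynomial.C (t k))).natDegree + 1 = Fintype.card I := by
  rw [Polynomial.natDegree_prod_of_monic _ _ (fun u _ => Polynomial.monic_X_sub_C _)]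
  simp only [Polynomial.natDegree_X_sub_C, Finset.sum_const, smul_eq_mul, mul_one]
  exact Finset.card_erase_add_one (Finset.mem_univ i)

theorem wrA_natDegree (α : ℂ) (f g : Polynomial ℂ) :
    (wrA α f g).natDegree ≤ f.natDegree + g.natDegree := by
  have hX : ∀ p q : Polynomial ℂ, (Polynomial.X * (p * Polynomial.derivative q)).natDegree
      ≤ p.natDegree + q.natDegree := by
    intro p q
    by_cases hq : q.natDegree = 0
    · rw [Polynomial.derivative_of_natDegree_zero hq]; simp
    · have h1 := Polynomial.natDegree_derivative_lt hq
      have h2 := Polynomial.natDegree_mul_le (p := p) (q := Polynomial.derivative q)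
      have h3 := Polynomial.natDegree_mul_le (p := (Polynomial.X : Polynomial ℂ))
        (q := p * Polynomial.derivative q)
      rw [Polynomial.natDegree_X] at h3
      omega
  unfold wrA
  rw [mul_sub, mul_comm (Polynomial.derivative f)]
  refine (Polynomial.natDegree_add_le _ _).trans (max_le ?_ ?_)
  · exact (Polynomial.natDegree_C_mul_le _ _).trans Polynomial.natDegree_mul_le
  · refine (Polynomial.natDegree_sub_le _ _).trans (max_le (hX _ _) ?_)
    rw [add_comm]
    exact hX _ _

theorem wrA_linear (α a b : ℂ) (g h : Polynomial ℂ) :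
    wrA α ((Polynomial.X - Polynomial.C a) * g) ((Polynomial.X - Polynomial.C b) * h)
      = (Polynomial.X - Polynomial.C a) * (Polynomial.X - Polynomial.C b) * wrA α g h
        + Polynomial.C (b - a) * Polynomial.X * (g * h) := by
  simp only [wrA, Polynomial.derivative_mul, Polynomial.derivative_sub, Polynomial.derivative_X,
    Polynomial.derivative_C, Polynomial.C_sub]
  ring

theorem lagrange_zero {K : Type*} [Fintype K] [DecidableEq K] (ζ : K → ℂ)
    (hζ : Function.Injective ζ) (p : Polynomial ℂ) (hp : p.natDegree + 1 < Fintype.card K) :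
    ∑ c, p.eval (ζ c) / ∏ d ∈ univ.erase c, (ζ c - ζ d) = 0 := by
  have := Lagrange.coeff_eq_sum (s := univ) (v := ζ) hζ.injOn (P := p) (by
    refine lt_of_le_of_lt Polynomial.degree_le_natDegree ?_
    rw [Finset.card_univ]
    exact_mod_cast (by omega))
  rw [← this]
  apply Polynomial.coeff_eq_zero_of_natDegree_lt
  rw [Finset.card_univ]; omega

section
variable {I J : Type*} [Fintype I] [DecidableEq I] [Fintype J] [DecidableEq J]

/-- permanent attached to the first block -/
def permA (t : I → ℂ) (ζ : I → ℂ) : ℂ := (Matrix.of fun i k => (t i - ζ k)⁻¹).permanent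

theorem dual_distinct_one (α β : ℂ) (hβ : β ≠ 0) (t : I → ℂ) (tt : J → ℂ)
    (ζ : I ⊕ J → ℂ) (hζ : Function.Injective ζ)
    (ht : Function.Injective t) (htt : Function.Injective tt)
    (h1 : ∀ i c, t i ≠ ζ c) (h2 : ∀ j c, tt j ≠ ζ c)
    (hW : wrA α (rootPoly t) (rootPoly tt) = Polynomial.C β * rootPoly ζ)
    (π : Equiv.Perm (I ⊕ J)) :
    (permA t (fun k => ζ (π (Sum.inl k))) * ∏ k, ζ (π (Sum.inl k))) *
        permA tt (fun l => ζ (Sum.inr l))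
      = (permA t (fun k => ζ (Sum.inl k)) * ∏ k, ζ (Sum.inl k)) *
        permA tt (fun l => ζ (π (Sum.inr l))) := by
  have hne : ∀ i j, t i ≠ tt j := by
    intro i j hij
    have e := congrArg (Polynomial.eval (t i)) hW
    have e1 : (rootPoly t).eval (t i) = 0 := by rw [rootPoly_erase t i]; simp
    have e2 : (rootPoly tt).eval (t i) = 0 := by rw [rootPoly_erase tt j, hij]; simp
    simp only [wrA, Polynomial.eval_add, Polynomial.eval_mul, Polynomial.eval_sub, e1, e2,
      mul_zero, zero_mul, sub_zero, add_zero, Polynomial.eval_C] at e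
    rcases mul_eq_zero.1 e.symm with h | h
    · exact hβ h
    · rw [rootPoly_eval, Finset.prod_eq_zero_iff] at h
      obtain ⟨c, -, hc⟩ := h
      exact h1 i c (sub_eq_zero.1 hc)
  set w : I ⊕ J → ℂ := fun c => (rootPoly t).eval (ζ c) * (rootPoly tt).eval (ζ c) /
    ∏ d ∈ univ.erase c, (ζ c - ζ d) with hw
  have hwne : ∀ c, w c ≠ 0 := by
    intro c
    simp only [hw, rootPoly_eval]
    refine div_ne_zero (mul_ne_zero ?_ ?_) ?_ <;> rw [Finset.prod_ne_zero_iff]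
    · exact fun i _ => sub_ne_zero.2 (h1 i c).symm
    · exact fun i _ => sub_ne_zero.2 (h2 i c).symm
    · exact fun d hd => sub_ne_zero.2 fun h => Finset.ne_of_mem_erase hd (hζ h).symm
  have hcard : Fintype.card (I ⊕ J) = Fintype.card I + Fintype.card J := Fintype.card_sum
  have orth1 : ∀ i j, ∑ c, w c * (t i - ζ c)⁻¹ * (tt j - ζ c)⁻¹ = 0 := by
    intro i j
    have := lagrange_zero ζ hζ ((∏ k ∈ univ.erase i, (Polynomial.X - Polynomial.C (t k))) *
      ∏ k ∈ univ.erase j, (Polynomial.X - Polynomial.C (tt k))) (by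
        have a1 := natDegree_erase t i
        have a2 := natDegree_erase tt j
        have a3 := Polynomial.natDegree_mul_le
          (p := ∏ k ∈ univ.erase i, (Polynomial.X - Polynomial.C (t k)))
          (q := ∏ k ∈ univ.erase j, (Polynomial.X - Polynomial.C (tt k)))
        omega)
    rw [← this]
    refine Finset.sum_congr rfl fun c _ => ?_
    have b1 := sub_ne_zero.2 (h1 i c)
    have b2 := sub_ne_zero.2 (h2 j c)
    simp only [hw]
    rw [rootPoly_erase t i, rootPoly_erase tt j]
    simp only [Polynomial.eval_mul, Polynomial.eval_sub, Polynomial.eval_X, Polynomial.eval_C]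
    rw [← neg_sub (t i), ← neg_sub (tt j)]
    field_simp
  have orth2 : ∀ i j, ∑ c, (ζ c * w c) * ((t i - ζ c)⁻¹) ^ 2 * ((tt j - ζ c)⁻¹) ^ 2 = 0 := by
    intro i j
    have := lagrange_zero ζ hζ (wrA α (∏ k ∈ univ.erase i, (Polynomial.X - Polynomial.C (t k)))
      (∏ k ∈ univ.erase j, (Polynomial.X - Polynomial.C (tt k)))) (by
        have a1 := natDegree_erase t i
        have a2 := natDegree_erase tt j
        have a3 := wrA_natDegree α
          (∏ k ∈ univ.erase i, (Polynomial.X - Polynomial.C (t k)))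
          (∏ k ∈ univ.erase j, (Polynomial.X - Polynomial.C (tt k)))
        omega)
    have b3 := sub_ne_zero.2 (hne i j)
    rw [← mul_eq_zero_iff_left (a := (t i - tt j)⁻¹) (inv_ne_zero b3), Finset.mul_sum] at this
    rw [← this]
    refine Finset.sum_congr rfl fun c _ => ?_
    have b1 := sub_ne_zero.2 (h1 i c)
    have b2 := sub_ne_zero.2 (h2 j c)
    have e := congrArg (Polynomial.eval (ζ c)) hW
    rw [rootPoly_erase t i, rootPoly_erase tt j, wrA_linear, rootPoly_erase ζ c] at e
    simp only [hw]
    rw [rootPoly_erase t i, rootPoly_erase tt j]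
    set g := (∏ k ∈ univ.erase i, (Polynomial.X - Polynomial.C (t k)))
    set h := (∏ k ∈ univ.erase j, (Polynomial.X - Polynomial.C (tt k)))
    simp only [Polynomial.eval_mul, Polynomial.eval_sub, Polynomial.eval_X, Polynomial.eval_C,
      Polynomial.eval_add, sub_self, zero_mul, mul_zero] at e ⊢
    have b4 : (∏ d ∈ univ.erase c, (ζ c - ζ d)) ≠ 0 := by
      rw [Finset.prod_ne_zero_iff]
      exact fun d hd => sub_ne_zero.2 fun h => Finset.ne_of_mem_erase hd (hζ h).symm
    field_simp
    linear_combination (-1 : ℂ) * (t i - ζ c) * (tt j - ζ c) * e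
  have d1 := plucker_dual (fun i c => (t i - ζ c)⁻¹) (fun j c => (tt j - ζ c)⁻¹) w orth1 π
  have d2 := plucker_dual (fun i c => ((t i - ζ c)⁻¹) ^ 2) (fun j c => ((tt j - ζ c)⁻¹) ^ 2)
    (fun c => ζ c * w c) orth2 π
  have inl_inj : Function.Injective (fun k : I => ζ (Sum.inl k)) :=
    hζ.comp Sum.inl_injective
  have inr_inj : Function.Injective (fun k : J => ζ (Sum.inr k)) :=
    hζ.comp Sum.inr_injective
  have inl_inj' : Function.Injective (fun k : I => ζ (π (Sum.inl k))) :=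
    hζ.comp (π.injective.comp Sum.inl_injective)
  have inr_inj' : Function.Injective (fun k : J => ζ (π (Sum.inr k))) :=
    hζ.comp (π.injective.comp Sum.inr_injective)
  rw [← borchardt t _ inl_inj (fun i k => h1 _ _), ← borchardt t _ inl_inj' (fun i k => h1 _ _),
    ← borchardt tt _ inr_inj (fun i k => h2 _ _), ← borchardt tt _ inr_inj' (fun i k => h2 _ _)]
    at d2
  simp only [Finset.prod_mul_distrib] at d2
  have c1 := cauchy_det_ne t _ inl_inj ht (fun i k => h1 _ _)
  have c3 := cauchy_det_ne tt _ inr_inj' htt (fun i k => h2 _ _)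
  have c5 : ∏ k : I, w (Sum.inl k) ≠ 0 := Finset.prod_ne_zero_iff.2 fun _ _ => hwne _
  unfold permA
  set A1 := (Matrix.of fun i k => (t i - ζ (Sum.inl k))⁻¹).det
  set A2 := (Matrix.of fun i k => (t i - ζ (π (Sum.inl k)))⁻¹).det
  set A3 := (Matrix.of fun i k => (tt i - ζ (Sum.inr k))⁻¹).det
  set A4 := (Matrix.of fun i k => (tt i - ζ (π (Sum.inr k)))⁻¹).det
  refine mul_left_cancel₀ (mul_ne_zero (mul_ne_zero c1 c5) c3) ?_
  linear_combination d2 - (Matrix.of fun i k => (t i - ζ (π (Sum.inl k)))⁻¹).permanent *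
    (∏ k, ζ (π (Sum.inl k))) * (Matrix.of fun i k => (tt i - ζ (Sum.inr k))⁻¹).permanent * d1

theorem dual_distinct (α β : ℂ) (hβ : β ≠ 0) (t : I → ℂ) (tt : J → ℂ)
    (ζ : I ⊕ J → ℂ) (hζ : Function.Injective ζ)
    (ht : Function.Injective t) (htt : Function.Injective tt)
    (h1 : ∀ i c, t i ≠ ζ c) (h2 : ∀ j c, tt j ≠ ζ c)
    (hW : wrA α (rootPoly t) (rootPoly tt) = Polynomial.C β * rootPoly ζ)
    (π π0 : Equiv.Perm (I ⊕ J)) :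
    (permA t (fun k => ζ (π (Sum.inl k))) * ∏ k, ζ (π (Sum.inl k))) *
        permA tt (fun l => ζ (π0 (Sum.inr l)))
      = (permA t (fun k => ζ (π0 (Sum.inl k))) * ∏ k, ζ (π0 (Sum.inl k))) *
        permA tt (fun l => ζ (π (Sum.inr l))) := by
  have := dual_distinct_one α β hβ t tt (ζ ∘ π0) (hζ.comp π0.injective) ht htt
    (fun i c => h1 _ _) (fun i c => h2 _ _) (by
      rw [hW, rootPoly, rootPoly]
      congr 1
      exact (Equiv.prod_comp π0 (fun c => Polynomial.X - Polynomial.C (ζ c))).symm) (π0⁻¹ * π)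
  simpa using this

end

theorem exists_perm_of_card {α β : Type*} [Fintype α] [DecidableEq β] (f g : α → β)
    (h : ∀ b, (univ.filter fun a => f a = b).card = (univ.filter fun a => g a = b).card) :
    ∃ σ : Equiv.Perm α, f = g ∘ σ := by
  have e : ∀ b, Nonempty ({a // f a = b} ≃ {a // g a = b}) := by
    intro b
    refine ⟨Fintype.equivOfCardEq ?_⟩
    rw [Fintype.card_subtype, Fintype.card_subtype]
    exact h b
  replace e := fun b => (e b).some
  refine ⟨(Equiv.sigmaFiberEquiv f).symm.trans
    ((Equiv.sigmaCongrRight e).trans (Equiv.sigmaFiberEquiv g)), ?_⟩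
  ext a
  exact ((e (f a)) ⟨a, rfl⟩).2.symm

theorem rootPoly_monic {K : Type*} [Fintype K] (ζ : K → ℂ) : (rootPoly ζ).Monic :=
  Polynomial.monic_prod_of_monic _ _ fun _ _ => Polynomial.monic_X_sub_C _

theorem rootPoly_natDegree {K : Type*} [Fintype K] (ζ : K → ℂ) :
    (rootPoly ζ).natDegree = Fintype.card K := by
  rw [rootPoly, Polynomial.natDegree_prod_of_monic _ _ (fun u _ => Polynomial.monic_X_sub_C _)]
  simp

theorem rootPoly_roots {K : Type*} [Fintype K] (ζ : K → ℂ) :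
    (rootPoly ζ).roots = univ.val.map ζ := by
  have : rootPoly ζ = (Multiset.map (fun a => Polynomial.X - Polynomial.C a)
      (univ.val.map ζ)).prod := by
    rw [Multiset.map_map]; rfl
  rw [this, Polynomial.roots_multiset_prod_X_sub_C]

theorem exists_perm_of_rootPoly {K : Type*} [Fintype K] (ζ ξ : K → ℂ)
    (h : rootPoly ζ = rootPoly ξ) : ∃ σ : Equiv.Perm K, ζ = ξ ∘ σ := by
  classical
  refine exists_perm_of_card ζ ξ fun b => ?_
  have := congrArg Polynomial.roots h
  rw [rootPoly_roots, rootPoly_roots] at this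
  have h2 := congrArg (Multiset.count b) this
  rw [Multiset.count_map, Multiset.count_map] at h2
  simp only [Finset.card_def, Finset.filter_val, eq_comm (a := b)] at h2 ⊢
  exact h2

theorem exists_rootPoly {K : Type*} [Fintype K] (p : Polynomial ℂ) (hp : p.Monic)
    (hd : p.natDegree = Fintype.card K) : ∃ ζ : K → ℂ, rootPoly ζ = p := by
  have hs := IsAlgClosed.splits p
  have hc : p.roots.toList.length = Fintype.card K := by
    rw [Multiset.length_toList, ← hs.natDegree_eq_card_roots, hd]
  let e : K ≃ Fin p.roots.toList.length := (Fintype.equivFin K).trans (finCongr hc.symm)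
  refine ⟨fun k => p.roots.toList.get (e k), ?_⟩
  rw [rootPoly, Equiv.prod_comp e
    (fun k => Polynomial.X - Polynomial.C (p.roots.toList.get k))]
  conv_rhs => rw [hs.eq_prod_roots_of_monic hp]
  conv_rhs => rw [← Multiset.coe_toList p.roots]
  rw [Multiset.map_coe, Multiset.prod_coe, ← List.prod_ofFn]
  congr 1
  apply List.ext_getElem <;> simp

theorem finite_bad (Q R : Polynomial ℂ) (hQ : 0 < Q.natDegree) (hc : IsCoprime Q R) :
    {ε : ℂ | ∃ x, (Q - Polynomial.C ε * R).eval x = 0 ∧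
      (Polynomial.derivative (Q - Polynomial.C ε * R)).eval x = 0}.Finite := by
  set D := Q * Polynomial.derivative R - Polynomial.derivative Q * R with hD
  have hD0 : D ≠ 0 := by
    intro h
    have h1 : Q ∣ Polynomial.derivative Q * R := ⟨Polynomial.derivative R, (sub_eq_zero.1 h).symm⟩
    have h2 := hc.dvd_of_dvd_mul_right h1
    have h3 : Polynomial.derivative Q ≠ 0 := by
      intro h
      have := Polynomial.derivative_eq_zero.1 h
      omega
    exact Polynomial.not_dvd_of_natDegree_lt h3
      (Polynomial.natDegree_derivative_lt hQ.ne') h2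
  refine (Set.Finite.image (fun x => Q.eval x / R.eval x)
    (D.roots.toFinset.finite_toSet)).subset ?_
  rintro ε ⟨x, h1, h2⟩
  simp only [Polynomial.derivative_sub, Polynomial.derivative_mul, Polynomial.derivative_C,
    Polynomial.eval_sub, Polynomial.eval_mul, Polynomial.eval_C, Polynomial.eval_add, zero_mul,
    Polynomial.eval_zero, zero_add] at h1 h2
  have hR : R.eval x ≠ 0 := by
    intro h
    obtain ⟨a, b, hab⟩ := hc
    have := congrArg (Polynomial.eval x) hab
    rw [h, mul_zero, sub_zero] at h1
    simp [h, h1] at this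
  refine ⟨x, ?_, ?_⟩
  · rw [Finset.mem_coe, Multiset.mem_toFinset, Polynomial.mem_roots hD0,
      Polynomial.IsRoot.def, hD, Polynomial.eval_sub, Polynomial.eval_mul, Polynomial.eval_mul]
    linear_combination (Polynomial.derivative R).eval x * h1 - R.eval x * h2
  · field_simp
    linear_combination h1

theorem injective_of_no_double {K : Type*} [Fintype K] (ζ : K → ℂ)
    (h : ¬ ∃ x, (rootPoly ζ).eval x = 0 ∧ (Polynomial.derivative (rootPoly ζ)).eval x = 0) :
    Function.Injective ζ := by
  classical
  intro c d hcd
  by_contra hne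
  apply h
  refine ⟨ζ c, ?_, ?_⟩
  · rw [rootPoly_erase ζ c]; simp
  · rw [rootPoly_erase ζ c]
    simp only [Polynomial.derivative_mul, Polynomial.eval_add, Polynomial.eval_mul,
      Polynomial.eval_sub, Polynomial.eval_X, Polynomial.eval_C, sub_self, zero_mul, add_zero,
      Polynomial.derivative_sub, Polynomial.derivative_X, Polynomial.derivative_C, sub_zero,
      Polynomial.eval_one, one_mul, Polynomial.eval_prod]
    exact Finset.prod_eq_zero (i := d) (by simp [Ne.symm hne]) (by rw [hcd, sub_self])

theorem root_bound (Q R : Polynomial ℂ) (N : ℕ)  :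
    ∃ K : ℝ, ∀ ε : ℂ, ‖ε‖ ≤ 1 → (Q - Polynomial.C ε * R).Monic →
      (Q - Polynomial.C ε * R).natDegree = N →
      ∀ x, (Q - Polynomial.C ε * R).eval x = 0 → ‖x‖ ≤ K := by
  refine ⟨((∑ i ∈ range N, (‖Q.coeff i‖₊ + ‖R.coeff i‖₊) + 1 : NNReal) : ℝ), ?_⟩
  intro ε hε hm hN x hx
  have h1 := Polynomial.IsRoot.norm_lt_cauchyBound hm.ne_zero hx
  refine h1.le.trans ?_
  refine add_le_add ?_ le_rfl
  rw [hm.leadingCoeff, nnnorm_one, div_one, hN]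
  refine Finset.sup_le fun i hi => ?_
  refine le_trans ?_ (Finset.single_le_sum (f := fun i => ‖Q.coeff i‖₊ + ‖R.coeff i‖₊)
    (fun _ _ => zero_le) hi)
  rw [Polynomial.coeff_sub, Polynomial.coeff_C_mul]
  refine (nnnorm_sub_le _ _).trans (add_le_add le_rfl ?_)
  rw [nnnorm_mul]
  exact mul_le_of_le_one_left zero_le hε

section
variable {I J : Type*} [Fintype I] [DecidableEq I] [Fintype J] [DecidableEq J]

open Filter Topology in
theorem permA_tendsto {E : Type*} {F : Filter E} (t : E → I → ℂ) (ζ : E → I → ℂ) (t0 ζ0 : I → ℂ)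
    (ht : ∀ i, Tendsto (fun ε => t ε i) F (𝓝 (t0 i)))
    (hζ : ∀ i, Tendsto (fun ε => ζ ε i) F (𝓝 (ζ0 i))) (hne : ∀ i k, t0 i ≠ ζ0 k) :
    Tendsto (fun ε => permA (t ε) (ζ ε)) F (𝓝 (permA t0 ζ0)) := by
  unfold permA Matrix.permanent
  refine tendsto_finsetSum _ fun σ _ => tendsto_finsetProd _ fun i _ => ?_
  exact ((ht _).sub (hζ _)).inv₀ (sub_ne_zero.2 (hne _ _))

open Filter Topology in
theorem ev_ne {E : Type*} {F : Filter E} {f g : E → ℂ} {a b : ℂ} (hf : Tendsto f F (𝓝 a))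
    (hg : Tendsto g F (𝓝 b)) (h : a ≠ b) : ∀ᶠ x in F, f x ≠ g x := by
  filter_upwards [(hf.sub hg).eventually_ne (sub_ne_zero.2 h)] with x hx
  exact sub_ne_zero.1 hx

open Filter Topology in
theorem dual_general_nonempty [Nonempty J] (α β : ℂ) (hβ : β ≠ 0) (t : I → ℂ) (tt : J → ℂ)
    (ζ : I ⊕ J → ℂ) (hζ0 : ∀ c, ζ c ≠ 0)
    (ht : Function.Injective t) (htt : Function.Injective tt)
    (h1 : ∀ i c, t i ≠ ζ c) (h2 : ∀ j c, tt j ≠ ζ c)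
    (hW : wrA α (rootPoly t) (rootPoly tt) = Polynomial.C β * rootPoly ζ)
    (π π0 : Equiv.Perm (I ⊕ J)) :
    (permA t (fun k => ζ (π (Sum.inl k))) * ∏ k, ζ (π (Sum.inl k))) *
        permA tt (fun l => ζ (π0 (Sum.inr l)))
      = (permA t (fun k => ζ (π0 (Sum.inl k))) * ∏ k, ζ (π0 (Sum.inl k))) *
        permA tt (fun l => ζ (π (Sum.inr l))) := by
  obtain ⟨j0⟩ := (inferInstance : Nonempty J)
  set y := rootPoly t with hy
  set h := ∏ k ∈ univ.erase j0, (Polynomial.X - Polynomial.C (tt k)) with hh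
  set Q := rootPoly ζ with hQ
  set R := Polynomial.C β⁻¹ * wrA α y h with hR
  have hyt : rootPoly tt = (Polynomial.X - Polynomial.C (tt j0)) * h := rootPoly_erase tt j0
  set ttε : ℂ → J → ℂ := fun ε => Function.update tt j0 (tt j0 + ε) with httε
  have hytε : ∀ ε, rootPoly (ttε ε) = (Polynomial.X - Polynomial.C (tt j0 + ε)) * h := by
    intro ε
    rw [rootPoly_erase (ttε ε) j0]
    simp only [httε, Function.update_self]
    congr 1
    refine Finset.prod_congr rfl fun k hk => ?_
    rw [Function.update_of_ne (Finset.ne_of_mem_erase hk)]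
  have hWε : ∀ ε, wrA α y (rootPoly (ttε ε)) = Polynomial.C β * (Q - Polynomial.C ε * R) := by
    intro ε
    have e1 : Polynomial.C β * (Q - Polynomial.C ε * R)
        = wrA α y (rootPoly tt) - Polynomial.C ε * wrA α y h := by
      rw [hW, hR, mul_sub]
      have : Polynomial.C β * Polynomial.C β⁻¹ = (1 : Polynomial ℂ) := by
        rw [← Polynomial.C_mul, mul_inv_cancel₀ hβ, Polynomial.C_1]
      linear_combination (- Polynomial.C ε * wrA α y h) * this
    rw [e1, hytε, hyt]
    simp only [wrA, Polynomial.derivative_mul, Polynomial.derivative_sub, Polynomial.derivative_X,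
      Polynomial.derivative_C, Polynomial.C_add, Polynomial.derivative_add]
    ring
  have hRne : ∀ c, R.eval (ζ c) ≠ 0 := by
    intro c hc
    have hc' : (wrA α y h).eval (ζ c) = 0 := by
      rw [hR, Polynomial.eval_mul, Polynomial.eval_C] at hc
      exact (mul_eq_zero.1 hc).resolve_left (inv_ne_zero hβ)
    have e1 : wrA α y (rootPoly tt) = (Polynomial.X - Polynomial.C (tt j0)) * wrA α y h
        + Polynomial.X * (y * h) := by
      rw [hyt]
      simp only [wrA, Polynomial.derivative_mul, Polynomial.derivative_sub,
        Polynomial.derivative_X, Polynomial.derivative_C]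
      ring
    have e2 := congrArg (Polynomial.eval (ζ c)) (e1.symm.trans hW)
    have e3 : Q.eval (ζ c) = 0 := by
      rw [hQ, rootPoly_erase ζ c]; simp
    simp only [Polynomial.eval_add, Polynomial.eval_mul, hc', mul_zero, zero_add, e3,
      Polynomial.eval_X] at e2
    rcases mul_eq_zero.1 e2 with e | e
    · exact hζ0 c e
    · rcases mul_eq_zero.1 e with e | e
      · rw [hy, rootPoly_eval, Finset.prod_eq_zero_iff] at e
        obtain ⟨i, -, hi⟩ := e
        exact h1 i c (sub_eq_zero.1 hi).symm
      · simp only [hh, Polynomial.eval_prod, Polynomial.eval_sub, Polynomial.eval_X,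
          Polynomial.eval_C] at e
        rw [Finset.prod_eq_zero_iff] at e
        obtain ⟨i, -, hi⟩ := e
        exact h2 i c (sub_eq_zero.1 hi).symm
  have hcop : IsCoprime Q R := by
    refine IsCoprime.prod_left fun c _ => ?_
    rw [(Polynomial.irreducible_X_sub_C (ζ c)).coprime_iff_not_dvd, Polynomial.dvd_iff_isRoot]
    exact hRne c
  have hcard : Fintype.card (I ⊕ J) = Fintype.card I + Fintype.card J := Fintype.card_sum
  have hQd : Q.natDegree = Fintype.card (I ⊕ J) := rootPoly_natDegree ζ
  have hRd : R.natDegree < Q.natDegree := by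
    have a1 := natDegree_erase tt j0
    have a2 := wrA_natDegree α y h
    have a3 : y.natDegree = Fintype.card I := rootPoly_natDegree t
    have a4 : R.natDegree ≤ _ := Polynomial.natDegree_C_mul_le _ _
    rw [← hh] at a1
    omega
  have hεd : ∀ ε : ℂ, (Polynomial.C ε * R).natDegree < Q.natDegree := fun ε =>
    lt_of_le_of_lt (Polynomial.natDegree_C_mul_le _ _) hRd
  have hmon : ∀ ε : ℂ, (Q - Polynomial.C ε * R).Monic := fun ε =>
    (rootPoly_monic ζ).sub_of_left (Polynomial.degree_lt_degree (hεd ε))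
  have hnd : ∀ ε : ℂ, (Q - Polynomial.C ε * R).natDegree = Fintype.card (I ⊕ J) := by
    intro ε
    rw [Polynomial.natDegree_sub_eq_left_of_natDegree_lt (hεd ε), hQd]
  choose Z hZ using fun ε => exists_rootPoly (K := I ⊕ J) _ (hmon ε) (hnd ε)
  obtain ⟨B, hB⟩ := root_bound Q R (Fintype.card (I ⊕ J))
  have hbad := finite_bad Q R (by have := hRd; omega) hcop
  -- the ultrafilter
  let U : Ultrafilter ℂ := Ultrafilter.of (𝓝[≠] (0 : ℂ))
  have hU : (U : Filter ℂ) ≤ 𝓝[≠] (0 : ℂ) := Ultrafilter.of_le _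
  have hU0 : (U : Filter ℂ) ≤ 𝓝 (0 : ℂ) := hU.trans nhdsWithin_le_nhds
  have ev_inj : ∀ᶠ ε in (U : Filter ℂ), Function.Injective (Z ε) := by
    refine hU ?_
    have : ∀ᶠ ε in 𝓝[≠] (0 : ℂ), ε ∉ {ε : ℂ | ∃ x, (Q - Polynomial.C ε * R).eval x = 0 ∧
      (Polynomial.derivative (Q - Polynomial.C ε * R)).eval x = 0} :=
      (hbad.subset Set.sdiff_subset).isClosed.isOpen_compl.mem_nhds
        (x := (0 : ℂ)) (s := ({ε : ℂ | ∃ x, (Q - Polynomial.C ε * R).eval x = 0 ∧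
      (Polynomial.derivative (Q - Polynomial.C ε * R)).eval x = 0} \ {0})ᶜ) (by simp) |>
        fun hn => by
          rw [eventually_nhdsWithin_iff]
          filter_upwards [hn] with ε h3 h4 h5
          exact h3 ⟨h5, h4⟩
    filter_upwards [this] with ε hε
    refine injective_of_no_double _ ?_
    rw [hZ]
    exact hε
  have ev_bd : ∀ᶠ ε in (U : Filter ℂ), Z ε ∈ Metric.closedBall (0 : I ⊕ J → ℂ) (max B 0) := by
    refine hU0 ?_
    filter_upwards [Metric.closedBall_mem_nhds (0 : ℂ) one_pos] with ε hε
    rw [mem_closedBall_zero_iff] at hε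
    show Z ε ∈ Metric.closedBall (0 : I ⊕ J → ℂ) (max B 0)
    rw [mem_closedBall_zero_iff, pi_norm_le_iff_of_nonneg (le_max_right _ _)]
    intro c
    refine le_trans (hB ε hε (hmon ε) (hnd ε) _ ?_) (le_max_left _ _)
    rw [← hZ, rootPoly_erase _ c]
    simp
  obtain ⟨ξ, -, hξ⟩ := (isCompact_closedBall (0 : I ⊕ J → ℂ) (max B 0)).ultrafilter_le_nhds
    (U.map Z) (by rw [Filter.le_principal_iff]; exact ev_bd)
  have hlim : Tendsto Z (U : Filter ℂ) (𝓝 ξ) := hξ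
  have hlimc : ∀ c, Tendsto (fun ε => Z ε c) (U : Filter ℂ) (𝓝 (ξ c)) :=
    fun c => (tendsto_pi_nhds.1 hlim) c
  have hidU : Tendsto (fun ε : ℂ => ε) (U : Filter ℂ) (𝓝 0) := hU0
  have hξQ : rootPoly ξ = rootPoly ζ := by
    refine Polynomial.funext fun x => ?_
    have l1 : Tendsto (fun ε => (rootPoly (Z ε)).eval x) (U : Filter ℂ)
        (𝓝 ((rootPoly ξ).eval x)) := by
      simp only [rootPoly_eval]
      exact tendsto_finsetProd _ fun c _ => tendsto_const_nhds.sub (hlimc c)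
    have l2 : Tendsto (fun ε => (rootPoly (Z ε)).eval x) (U : Filter ℂ)
        (𝓝 (Q.eval x - 0 * R.eval x)) := by
      simp only [hZ, Polynomial.eval_sub, Polynomial.eval_mul, Polynomial.eval_C]
      exact tendsto_const_nhds.sub (hidU.mul tendsto_const_nhds)
    rw [tendsto_nhds_unique l1 l2, zero_mul, sub_zero]
  obtain ⟨τ, hτ⟩ := exists_perm_of_rootPoly ζ ξ hξQ.symm
  have h1ξ : ∀ i c, t i ≠ ξ c := by
    intro i c
    have := h1 i (τ.symm c)
    simpa [hτ] using this
  have h2ξ : ∀ i c, tt i ≠ ξ c := by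
    intro i c
    have := h2 i (τ.symm c)
    simpa [hτ] using this
  have httlim : ∀ j, Tendsto (fun ε => ttε ε j) (U : Filter ℂ) (𝓝 (tt j)) := by
    intro j
    by_cases hj : j = j0
    · subst hj
      simp only [httε, Function.update_self]
      simpa using (tendsto_const_nhds (x := tt j)).add hidU
    · simp only [httε, Function.update_of_ne hj]
      exact tendsto_const_nhds
  have ev1 : ∀ᶠ ε in (U : Filter ℂ), ∀ i c, t i ≠ Z ε c := by
    rw [eventually_all]; intro i
    rw [eventually_all]; intro c
    exact ev_ne tendsto_const_nhds (hlimc c) (h1ξ i c)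
  have ev2 : ∀ᶠ ε in (U : Filter ℂ), ∀ j c, ttε ε j ≠ Z ε c := by
    rw [eventually_all]; intro i
    rw [eventually_all]; intro c
    exact ev_ne (httlim i) (hlimc c) (h2ξ i c)
  have ev3 : ∀ᶠ ε in (U : Filter ℂ), Function.Injective (ttε ε) := by
    have : ∀ᶠ ε in (U : Filter ℂ), ∀ j k, j ≠ k → ttε ε j ≠ ttε ε k := by
      rw [eventually_all]; intro j
      rw [eventually_all]; intro k
      by_cases hjk : j = k
      · simp [hjk]
      · filter_upwards [ev_ne (httlim j) (httlim k) (fun e => hjk (htt e))] with ε h _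
        exact h
    filter_upwards [this] with ε h
    intro j k hjk
    by_contra hne
    exact h j k hne hjk
  have key : ∀ ρ ρ0 : Equiv.Perm (I ⊕ J),
    (permA t (fun k => ξ (ρ (Sum.inl k))) * ∏ k, ξ (ρ (Sum.inl k))) *
        permA tt (fun l => ξ (ρ0 (Sum.inr l)))
      = (permA t (fun k => ξ (ρ0 (Sum.inl k))) * ∏ k, ξ (ρ0 (Sum.inl k))) *
        permA tt (fun l => ξ (ρ (Sum.inr l))) := by
    intro ρ ρ0
    have tl : ∀ ρ ρ0 : Equiv.Perm (I ⊕ J), Tendsto (fun ε =>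
        (permA t (fun k => Z ε (ρ (Sum.inl k))) * ∏ k, Z ε (ρ (Sum.inl k))) *
        permA (ttε ε) (fun l => Z ε (ρ0 (Sum.inr l)))) (U : Filter ℂ)
        (𝓝 ((permA t (fun k => ξ (ρ (Sum.inl k))) * ∏ k, ξ (ρ (Sum.inl k))) *
        permA tt (fun l => ξ (ρ0 (Sum.inr l))))) := by
      intro ρ ρ0
      refine Tendsto.mul (Tendsto.mul ?_ ?_) ?_
      · exact permA_tendsto (fun _ => t) _ _ _ (fun _ => tendsto_const_nhds)
          (fun _ => hlimc _) (fun _ _ => h1ξ _ _)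
      · exact tendsto_finsetProd _ fun k _ => hlimc _
      · exact permA_tendsto ttε _ _ _ httlim (fun _ => hlimc _) (fun _ _ => h2ξ _ _)
    refine tendsto_nhds_unique_of_eventuallyEq (tl ρ ρ0) (tl ρ0 ρ) ?_
    filter_upwards [ev_inj, ev1, ev2, ev3] with ε g1 g2 g3 g4
    exact dual_distinct α β hβ t (ttε ε) (Z ε) g1 ht g4 g2 g3
      (by rw [hZ]; exact hWε ε) ρ ρ0
  have := key (τ * π) (τ * π0)
  simpa [hτ] using this

theorem dual_general (α β : ℂ) (hβ : β ≠ 0) (t : I → ℂ) (tt : J → ℂ)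
    (ζ : I ⊕ J → ℂ) (hζ0 : ∀ c, ζ c ≠ 0)
    (ht : Function.Injective t) (htt : Function.Injective tt)
    (h1 : ∀ i c, t i ≠ ζ c) (h2 : ∀ j c, tt j ≠ ζ c)
    (hW : wrA α (rootPoly t) (rootPoly tt) = Polynomial.C β * rootPoly ζ)
    (π π0 : Equiv.Perm (I ⊕ J)) :
    (permA t (fun k => ζ (π (Sum.inl k))) * ∏ k, ζ (π (Sum.inl k))) *
        permA tt (fun l => ζ (π0 (Sum.inr l)))
      = (permA t (fun k => ζ (π0 (Sum.inl k))) * ∏ k, ζ (π0 (Sum.inl k))) *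
        permA tt (fun l => ζ (π (Sum.inr l))) := by
  rcases isEmpty_or_nonempty J with hJ | hJ
  · have e : ∀ π : Equiv.Perm (I ⊕ J), permA t (fun k => ζ (π (Sum.inl k)))
          = permA t (fun k => ζ (Sum.inl k)) ∧
        ∏ k, ζ (π (Sum.inl k)) = ∏ k, ζ (Sum.inl k) := by
      intro π
      let ρ : Equiv.Perm I := (Equiv.sumEmpty I J).symm.trans (π.trans (Equiv.sumEmpty I J))
      have hρ : ∀ k, π (Sum.inl k) = Sum.inl (ρ k) := by
        intro k
        apply (Equiv.sumEmpty I J).injective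
        simp [ρ]
      simp only [hρ]
      constructor
      · exact Matrix.permanent_permute_rows ρ (Matrix.of fun i k => (t i - ζ (Sum.inl k))⁻¹)
      · exact Equiv.prod_comp ρ (fun k => ζ (Sum.inl k))
    have e2 : (fun l : J => ζ (π (Sum.inr l))) = fun l => ζ (π0 (Sum.inr l)) :=
      Subsingleton.elim _ _
    rw [(e π).1, (e π).2, (e π0).1, (e π0).2, e2]
  · exact dual_general_nonempty α β hβ t tt ζ hζ0 ht htt h1 h2 hW π π0

end

section
variable {n : ℕ}

def toF (m : Fin n → ℕ) (l : Idx m) : Fin n →₀ ℕ := Finsupp.equivFunOnFinite.symm fun s => (l s : ℕ)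

@[simp] theorem toF_apply (m : Fin n → ℕ) (l : Idx m) (s : Fin n) : toF m l s = (l s : ℕ) := rfl

def facF (k : Fin n →₀ ℕ) : ℂ := ∏ s, ((k s).factorial : ℂ)

theorem facF_add (k : Fin n →₀ ℕ) (s : Fin n) :
    facF (k + Finsupp.single s 1) = (k s + 1 : ℂ) * facF k := by
  unfold facF
  rw [← Finset.mul_prod_erase univ _ (Finset.mem_univ s),
    ← Finset.mul_prod_erase univ (fun s => ((k s).factorial : ℂ)) (Finset.mem_univ s)]
  have : ∀ u ∈ univ.erase s, ((((k + Finsupp.single s 1 : Fin n →₀ ℕ)) u).factorial : ℂ) = ((k u).factorial : ℂ) := by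
    intro u hu
    have : s ≠ u := (Finset.ne_of_mem_erase hu).symm
    simp [Finsupp.single_apply, this]
  rw [Finset.prod_congr rfl this]
  simp only [Finsupp.add_apply, Finsupp.single_eq_same, Nat.factorial_succ]
  push_cast
  ring

def Phi (m : Fin n → ℕ) : MvPolynomial (Fin n) ℂ →ₗ[ℂ] TV m where
  toFun p l := MvPolynomial.coeff (toF m l) p * facF (toF m l)
  map_add' p q := by funext l; simp [add_mul]
  map_smul' a p := by funext l; simp [mul_assoc]

theorem Phi_apply (m : Fin n → ℕ) (p : MvPolynomial (Fin n) ℂ) (l : Idx m) :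
    Phi m p l = MvPolynomial.coeff (toF m l) p * facF (toF m l) := rfl

theorem coeff_pd (p : MvPolynomial (Fin n) ℂ) (s : Fin n) (k : Fin n →₀ ℕ) :
    MvPolynomial.coeff k (MvPolynomial.pderiv s p)
      = (k s + 1 : ℂ) * MvPolynomial.coeff (k + Finsupp.single s 1) p := by
  induction p using MvPolynomial.induction_on' with
  | monomial u a =>
    rw [MvPolynomial.pderiv_monomial, MvPolynomial.coeff_monomial, MvPolynomial.coeff_monomial]
    by_cases hu : u s = 0
    · have : u ≠ k + Finsupp.single s 1 := by
        intro h; rw [h] at hu; simp at hu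
      simp [hu, this]
    · have : u - Finsupp.single s 1 = k ↔ u = k + Finsupp.single s 1 := by
        constructor
        · rintro rfl
          rw [tsub_add_cancel_of_le]
          rw [Finsupp.single_le_iff]; omega
        · rintro rfl
          simp
      simp only [this]
      split_ifs with h
      · subst h; simp; ring
      · simp
  | add p q hp hq => simp [hp, hq, mul_add]

theorem Phi_X_mul (m : Fin n → ℕ) (s : Fin n) (p : MvPolynomial (Fin n) ℂ) :
    Phi m (MvPolynomial.X s * p) = E21 m s (Phi m p) := by
  funext l
  simp only [E21, mulShift, LinearMap.coe_mk, AddHom.coe_mk, Phi_apply]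
  rw [MvPolynomial.coeff_X_mul']
  by_cases h : l s = 0
  · have : s ∉ (toF m l).support := by simp [h]
    simp [h]
  · have hv : (l s : ℕ) ≠ 0 := by intro h'; apply h; ext; simpa using h'
    have hs : s ∈ (toF m l).support := by simp [hv, h]
    rw [if_pos hs]
    set l' : Idx m := Function.update l s (l s - 1) with hl'
    have e : toF m l = toF m l' + Finsupp.single s 1 := by
      ext u
      by_cases hu : u = s
      · subst hu
        simp only [toF_apply, Finsupp.add_apply, Finsupp.single_eq_same, hl', Function.update_self]
        rw [Fin.val_sub_one_of_ne_zero h]; omega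
      · simp [hl', Function.update_of_ne hu, Finsupp.single_apply, Ne.symm hu]
    have e3 : ((l s : ℕ) : ℂ) = ((toF m l') s : ℂ) + 1 := by
      have := DFunLike.congr_fun e s
      simp only [toF_apply, Finsupp.add_apply, Finsupp.single_eq_same] at this
      rw [this]; simp
    rw [e, facF_add, e3]
    simp only [add_tsub_cancel_right]
    ring

theorem Phi_D (m : Fin n → ℕ) (s : Fin n) (p : MvPolynomial (Fin n) ℂ) :
    Phi m (MvPolynomial.C (m s : ℂ) * MvPolynomial.pderiv s p
      - MvPolynomial.X s * MvPolynomial.pderiv s (MvPolynomial.pderiv s p)) = E12 m s (Phi m p) := by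
  funext l
  have e2 : MvPolynomial.coeff (toF m l) (MvPolynomial.X s *
      MvPolynomial.pderiv s (MvPolynomial.pderiv s p))
      = ((l s : ℕ) : ℂ) * (((l s : ℕ) : ℂ) + 1) *
        MvPolynomial.coeff (toF m l + Finsupp.single s 1) p := by
    rw [MvPolynomial.coeff_X_mul']
    by_cases h : (l s : ℕ) = 0
    · simp [h]
    · have hs : s ∈ (toF m l).support := by simp; exact fun h' => h (by simp [h'])
      rw [if_pos hs, coeff_pd, coeff_pd, tsub_add_cancel_of_le]
      · obtain ⟨q, hq⟩ := Nat.exists_eq_succ_of_ne_zero h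
        simp [hq]; ring
      · rw [Finsupp.single_le_iff]; simp; omega
  simp only [E12, mulShift, LinearMap.coe_mk, AddHom.coe_mk, Phi_apply]
  rw [MvPolynomial.coeff_sub, MvPolynomial.coeff_C_mul, e2, coeff_pd]
  simp only [toF_apply]
  by_cases h : (l s : ℕ) = m s
  · simp only [h]
    ring
  · have hlt : l s < Fin.last (m s) := by
      rw [Fin.lt_def]; simp; have := (l s).2; omega
    have e : toF m (Function.update l s (l s + 1)) = toF m l + Finsupp.single s 1 := by
      ext u
      by_cases hu : u = s
      · subst hu
        simp only [toF_apply, Finsupp.add_apply, Finsupp.single_eq_same, Function.update_self]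
        rw [Fin.val_add_one_of_lt hlt]
      · simp [Function.update_of_ne hu, Finsupp.single_apply, Ne.symm hu]
    rw [e, facF_add]
    simp only [toF_apply]
    ring

def sumX (n : ℕ) : MvPolynomial (Fin n) ℂ := ∑ s, MvPolynomial.X s

def Dop (m : Fin n → ℕ) (p : MvPolynomial (Fin n) ℂ) : MvPolynomial (Fin n) ℂ :=
  ∑ s, (MvPolynomial.C (m s : ℂ) * MvPolynomial.pderiv s p
      - MvPolynomial.X s * MvPolynomial.pderiv s (MvPolynomial.pderiv s p))

theorem Phi_sumX (m : Fin n → ℕ) (p : MvPolynomial (Fin n) ℂ) :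
    Phi m (sumX n * p) = e21T m (Phi m p) := by
  simp only [sumX, Finset.sum_mul, map_sum, Phi_X_mul, e21T, LinearMap.sum_apply]

theorem Phi_Dop (m : Fin n → ℕ) (p : MvPolynomial (Fin n) ℂ) :
    Phi m (Dop m p) = e12T m (Phi m p) := by
  simp only [Dop, map_sum, Phi_D, e12T, LinearMap.sum_apply]

theorem Phi_sumX_pow (m : Fin n → ℕ) (k : ℕ) (p : MvPolynomial (Fin n) ℂ) :
    Phi m (sumX n ^ k * p) = (e21T m ^ k) (Phi m p) := by
  induction k with
  | zero => simp
  | succ k ih => rw [pow_succ', mul_assoc, Phi_sumX, ih, pow_succ', Module.End.mul_apply]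
end

section
variable {n : ℕ}

def fib {I : Type*} [Fintype I] (f : I → Fin n) : Fin n →₀ ℕ :=
  Finsupp.equivFunOnFinite.symm fun s => (univ.filter fun a => f a = s).card

theorem fib_apply {I : Type*} [Fintype I] (f : I → Fin n) (s : Fin n) :
    fib f s = (univ.filter fun a => f a = s).card := rfl

theorem card_perm_fibre {I : Type*} [Fintype I] [DecidableEq I] (f g : I → Fin n) :
    (((univ : Finset (Equiv.Perm I)).filter fun ρ : Equiv.Perm I => f ∘ ρ = g).card : ℂ)
      = if fib g = fib f then facF (fib f) else 0 := by
  split_ifs with h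
  · obtain ⟨ρ0, h0⟩ := exists_perm_of_card g f (fun s => DFunLike.congr_fun h s)
    have h1 : ((univ : Finset (Equiv.Perm I)).filter fun ρ : Equiv.Perm I => f ∘ ρ = g).card
        = ((univ : Finset (Equiv.Perm I)).filter fun ρ : Equiv.Perm I => f ∘ ρ = f).card := by
      refine Finset.card_equiv (Equiv.mulRight ρ0⁻¹) fun ρ => ?_
      simp only [Finset.mem_filter, Finset.mem_univ, true_and, Equiv.coe_mulRight, h0]
      constructor
      · intro hh
        funext x
        have := congrFun hh (ρ0⁻¹ x)
        simpa using this
      · intro hh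
        funext x
        have := congrFun hh (ρ0 x)
        simpa using this
    have h2 := DomMulAct.stabilizer_card f
    rw [h1, ← Fintype.card_subtype, h2]
    simp only [facF, fib_apply, Fintype.card_subtype]
    push_cast
    rfl
  · rw [Nat.cast_eq_zero, Finset.card_eq_zero, Finset.filter_eq_empty_iff]
    rintro ρ - rfl
    apply h
    ext s
    simp only [fib_apply]
    refine Finset.card_equiv ρ fun x => ?_
    simp

theorem sum_perm_fibre {I : Type*} [Fintype I] [DecidableEq I] (f : I → Fin n)
    (c : I → Fin n → ℂ) :
    ∑ ρ : Equiv.Perm I, ∏ i, c (ρ i) (f i)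
      = ∑ g : I → Fin n, if fib g = fib f then facF (fib f) * ∏ i, c i (g i) else 0 := by
  have e1 : ∑ ρ : Equiv.Perm I, ∏ i, c (ρ i) (f i)
      = ∑ ρ : Equiv.Perm I, ∏ i, c i ((f ∘ ρ) i) := by
    rw [← Equiv.sum_comp (Equiv.inv (Equiv.Perm I))]
    refine Finset.sum_congr rfl fun ρ _ => ?_
    rw [← Equiv.prod_comp ρ]
    simp
  rw [e1, ← Finset.sum_fiberwise univ (fun ρ : Equiv.Perm I => f ∘ ρ)]
  refine Finset.sum_congr rfl fun g _ => ?_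
  rw [Finset.sum_congr rfl (g := fun _ => ∏ i, c i (g i)), Finset.sum_const, nsmul_eq_mul,
    card_perm_fibre]
  · split_ifs <;> simp
  · intro ρ hρ
    rw [(Finset.mem_filter.1 hρ).2]

theorem coeff_prod_lin {I : Type*} [Fintype I] [DecidableEq I] (c : I → Fin n → ℂ)
    (k : Fin n →₀ ℕ) :
    MvPolynomial.coeff k (∏ i, ∑ s, MvPolynomial.C (c i s) * MvPolynomial.X s)
      = ∑ g : I → Fin n, if fib g = k then ∏ i, c i (g i) else 0 := by
  rw [Finset.prod_univ_sum, MvPolynomial.coeff_sum, Fintype.piFinset_univ]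
  refine Finset.sum_congr rfl fun g _ => ?_
  have : ∏ i, (MvPolynomial.C (c i (g i)) * MvPolynomial.X (g i) : MvPolynomial (Fin n) ℂ)
      = MvPolynomial.monomial (fib g) (∏ i, c i (g i)) := by
    rw [Finset.prod_mul_distrib, ← map_prod, MvPolynomial.monomial_eq]
    congr 1
    rw [Finsupp.prod_fintype _ _ (fun _ => pow_zero _)]
    rw [← Finset.prod_fiberwise univ g]
    refine Finset.prod_congr rfl fun s _ => ?_
    rw [Finset.prod_congr rfl (g := fun _ => MvPolynomial.X s), Finset.prod_const, fib_apply]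
    intro i hi
    rw [(Finset.mem_filter.1 hi).2]
  rw [this, MvPolynomial.coeff_monomial]

theorem fib_sum {I : Type*} [Fintype I] (f : I → Fin n) : ∑ s, fib f s = Fintype.card I := by
  simp only [fib_apply]
  rw [← Finset.card_eq_sum_card_fiberwise (fun _ _ => Finset.mem_coe.2 (Finset.mem_univ _))]
  rfl

theorem Phi_prod_lin (m : Fin n → ℕ) {I : Type*} [Fintype I] [DecidableEq I] (c : I → Fin n → ℂ)
    (l : Idx m) (f : I → Fin n) (hf : fib f = toF m l) :
    Phi m (∏ i, ∑ s, MvPolynomial.C (c i s) * MvPolynomial.X s) l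
      = ∑ ρ : Equiv.Perm I, ∏ i, c (ρ i) (f i) := by
  rw [Phi_apply, coeff_prod_lin, sum_perm_fibre, hf, Finset.sum_mul]
  refine Finset.sum_congr rfl fun g _ => ?_
  split_ifs <;> ring

theorem Phi_prod_lin_zero (m : Fin n → ℕ) {I : Type*} [Fintype I] [DecidableEq I]
    (c : I → Fin n → ℂ) (l : Idx m) (hl : ∑ s, (l s : ℕ) ≠ Fintype.card I) :
    Phi m (∏ i, ∑ s, MvPolynomial.C (c i s) * MvPolynomial.X s) l = 0 := by
  rw [Phi_apply, coeff_prod_lin, Finset.sum_eq_zero, zero_mul]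
  intro g _
  rw [if_neg]
  intro h
  apply hl
  rw [← fib_sum g, h]
  rfl

theorem pref_eq (m : Fin n → ℕ) (l : Idx m) (s : Fin n) :
    ∑ i : Fin s.1, (l (Fin.castLE s.2.le i) : ℕ) = pref m l s := by
  unfold pref
  symm
  refine Finset.sum_bij' (fun u hu => ⟨u.1, (Finset.mem_filter.1 hu).2⟩)
    (fun i _ => Fin.castLE s.2.le i) ?_ ?_ ?_ ?_ ?_
  · intros; simp
  · intro i _
    exact Finset.mem_filter.2 ⟨Finset.mem_univ _, Fin.lt_def.2 i.2⟩
  · intros; rfl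
  · intros; rfl
  · intros; rfl

/-- the standard colouring attached to a composition -/
theorem exists_colour (m : Fin n → ℕ) (m' : ℕ) (l : Idx m) (hl : ∑ s, (l s : ℕ) = m') :
    ∃ f : Fin m' → Fin n, fib f = toF m l ∧ ∀ (z : Fin n → ℂ) (t : Fin m' → ℂ),
      omegaCoeff m z t l = ∑ ρ : Equiv.Perm (Fin m'), ∏ i, (t (ρ i) - z (f i))⁻¹ := by
  subst hl
  let e := finSigmaFinEquiv (n := fun s => (l s : ℕ))
  refine ⟨fun i => (e.symm i).1, ?_, ?_⟩
  · ext s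
    rw [fib_apply, toF_apply]
    have hinj : Function.Injective fun j : Fin (l s : ℕ) => e ⟨s, j⟩ := by
      intro a b h
      simpa using h
    have : (univ.filter fun i => (e.symm i).1 = s)
        = univ.image fun j : Fin (l s : ℕ) => e ⟨s, j⟩ := by
      ext i
      simp only [Finset.mem_filter, Finset.mem_univ, true_and, Finset.mem_image]
      constructor
      · rintro rfl
        exact ⟨(e.symm i).2, e.apply_symm_apply i⟩
      · rintro ⟨j, rfl⟩
        rw [e.symm_apply_apply]
    rw [this, Finset.card_image_of_injective _ hinj, Finset.card_univ, Fintype.card_fin]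
  · intro z t
    unfold omegaCoeff
    refine Finset.sum_congr rfl fun ρ _ => ?_
    rw [← Equiv.prod_comp e, Fintype.prod_sigma]
    refine Finset.prod_congr rfl fun s _ => ?_
    rw [Finset.prod_Ico_eq_prod_range, add_tsub_cancel_left, Finset.prod_range]
    refine Finset.prod_congr rfl fun j _ => ?_
    have hv : (e ⟨s, j⟩ : ℕ) = pref m l s + j := by
      rw [finSigmaFinEquiv_apply, ← pref_eq]
    have hlt : pref m l s + (j : ℕ) < ∑ s, (l s : ℕ) := hv ▸ (e ⟨s, j⟩).2
    have he : (⟨pref m l s + (j : ℕ), hlt⟩ : Fin _) = e ⟨s, j⟩ := Fin.ext hv.symm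
    simp only [extt, hlt, dif_pos, he, Function.comp, Equiv.symm_apply_apply]

theorem betheVec_eq_Phi (m : Fin n → ℕ) (z : Fin n → ℂ) {m' : ℕ} (t : Fin m' → ℂ) :
    betheVec m z t
      = Phi m (∏ i, ∑ s, MvPolynomial.C ((t i - z s)⁻¹) * MvPolynomial.X s) := by
  funext l
  unfold betheVec
  split_ifs with h
  · obtain ⟨f, hf, hf2⟩ := exists_colour m m' l h
    rw [hf2, Phi_prod_lin m (fun i s => (t i - z s)⁻¹) l f hf]
  · rw [Phi_prod_lin_zero m (fun i s => (t i - z s)⁻¹)]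
    simpa using h
end

section

theorem der_prod {I A : Type*} [DecidableEq I] [CommRing A] [Algebra ℂ A]
    (d : Derivation ℂ A A) (L : I → A) (c : I → ℂ) (hd : ∀ i, d (L i) = algebraMap ℂ A (c i))
    (s : Finset I) :
    d (∏ i ∈ s, L i) = ∑ i ∈ s, c i • ∏ k ∈ s.erase i, L k := by
  induction s using Finset.induction_on with
  | empty => simp
  | insert a s ha ih =>
    rw [Finset.prod_insert ha, Derivation.leibniz, ih, Finset.sum_insert ha,
      Finset.erase_insert ha, hd, smul_eq_mul, smul_eq_mul, Finset.mul_sum, add_comm]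
    congr 1
    · rw [mul_comm, Algebra.smul_def]
    · refine Finset.sum_congr rfl fun i hi => ?_
      have hia : a ≠ i := fun h => ha (h ▸ hi)
      rw [Finset.erase_insert_of_ne hia, Finset.prod_insert
        (fun h => ha (Finset.mem_of_mem_erase h)), mul_smul_comm]

theorem pf_id (u w z : ℂ) (hu : u ≠ z) (hw : w ≠ z) (huw : u ≠ w) :
    (u - z)⁻¹ * (w - z)⁻¹ = (w - u)⁻¹ * ((u - z)⁻¹ - (w - z)⁻¹) := by
  have h1 := sub_ne_zero.2 hu
  have h2 := sub_ne_zero.2 hw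
  have h3 := sub_ne_zero.2 huw.symm
  field_simp
  ring

theorem bae_abstract {I S A : Type*} [Fintype I] [DecidableEq I] [Fintype S] [CommRing A]
    [Algebra ℂ A] (d : S → Derivation ℂ A A) (x : S → A) (t : I → ℂ) (z : S → ℂ) (w : S → ℂ)
    (ht : Function.Injective t) (htz : ∀ i s, t i ≠ z s)
    (L : I → A) (hL : ∀ i, L i = ∑ s, (t i - z s)⁻¹ • x s)
    (hd : ∀ s i, d s (L i) = algebraMap ℂ A ((t i - z s)⁻¹))
    (hbae : ∀ i, ∑ s, w s * (t i - z s)⁻¹ - ∑ j ∈ univ.erase i, 2 * (t i - t j)⁻¹ = 0) :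
    ∑ s, (w s • d s (∏ i, L i) - x s * d s (d s (∏ i, L i))) = 0 := by
  set G : I → A := fun i => ∏ k ∈ univ.erase i, L k with hG
  set H : I → I → A := fun i j => ∏ k ∈ (univ.erase i).erase j, L k with hH
  have e1 : ∀ s, d s (∏ i, L i) = ∑ i, (t i - z s)⁻¹ • G i :=
    fun s => der_prod (d s) L (fun i => (t i - z s)⁻¹) (hd s) univ
  have e2 : ∀ s, d s (d s (∏ i, L i))
      = ∑ i, ∑ j ∈ univ.erase i, ((t i - z s)⁻¹ * (t j - z s)⁻¹) • H i j := by
    intro s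
    rw [e1, map_sum]
    refine Finset.sum_congr rfl fun i _ => ?_
    rw [Derivation.map_smul, der_prod (d s) L (fun i => (t i - z s)⁻¹) (hd s), Finset.smul_sum]
    refine Finset.sum_congr rfl fun j _ => ?_
    rw [smul_smul]
  have e3 : ∑ s, x s * d s (d s (∏ i, L i))
      = ∑ i, ∑ j ∈ univ.erase i, (t j - t i)⁻¹ • (G j - G i) := by
    simp only [e2, Finset.mul_sum]
    rw [Finset.sum_comm]
    refine Finset.sum_congr rfl fun i _ => ?_
    rw [Finset.sum_comm]
    refine Finset.sum_congr rfl fun j hj => ?_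
    have hij : j ≠ i := Finset.ne_of_mem_erase hj
    have g1 : G j = L i * H i j := by
      simp only [hG, hH]
      rw [Finset.erase_right_comm]
      exact (Finset.mul_prod_erase _ _ (Finset.mem_erase.2 ⟨hij.symm, Finset.mem_univ _⟩)).symm
    have g2 : G i = L j * H i j := by
      simp only [hG, hH]
      exact (Finset.mul_prod_erase _ _ hj).symm
    rw [g1, g2, ← sub_mul, hL, hL, ← Finset.sum_sub_distrib, Finset.sum_mul, Finset.smul_sum]
    refine Finset.sum_congr rfl fun s _ => ?_
    rw [pf_id (t i) (t j) (z s) (htz i s) (htz j s) (fun h => hij (ht h).symm), ← sub_smul,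
      smul_mul_assoc, smul_smul, mul_smul_comm]
  have e4 : ∑ i, ∑ j ∈ univ.erase i, (t j - t i)⁻¹ • (G j - G i)
      = ∑ i, (∑ j ∈ univ.erase i, 2 * (t i - t j)⁻¹) • G i := by
    have s1 : ∑ i, ∑ j ∈ univ.erase i, (t j - t i)⁻¹ • G j
        = ∑ i, ∑ j ∈ univ.erase i, (t i - t j)⁻¹ • G i := by
      rw [Finset.sum_comm' (t' := univ) (s' := fun j => univ.erase j)]
      intro a b
      simp [ne_comm]
    simp only [smul_sub, Finset.sum_sub_distrib]
    rw [s1, ← Finset.sum_sub_distrib]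
    refine Finset.sum_congr rfl fun i _ => ?_
    rw [← Finset.sum_sub_distrib, Finset.sum_smul]
    refine Finset.sum_congr rfl fun j _ => ?_
    rw [← sub_smul, ← neg_sub (t i) (t j), inv_neg]
    congr 1
    ring
  rw [Finset.sum_sub_distrib, e3, e4]
  have e5 : ∑ s, w s • d s (∏ i, L i) = ∑ i, (∑ s, w s * (t i - z s)⁻¹) • G i := by
    simp only [e1, Finset.smul_sum, smul_smul, Finset.sum_smul]
    rw [Finset.sum_comm]
  rw [e5, ← Finset.sum_sub_distrib]
  refine Finset.sum_eq_zero fun i _ => ?_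
  rw [← sub_smul, hbae, zero_smul]

variable {n : ℕ}

/-- coefficientwise partial derivative -/
def dcoef (s : Fin n) : Derivation ℂ (Polynomial (MvPolynomial (Fin n) ℂ))
    (Polynomial (MvPolynomial (Fin n) ℂ)) :=
  PolynomialModule.equivPolynomialSelf.compDer (MvPolynomial.pderiv s).mapCoeffs

theorem dcoef_coeff (s : Fin n) (p : Polynomial (MvPolynomial (Fin n) ℂ)) (k : ℕ) :
    (dcoef s p).coeff k = MvPolynomial.pderiv s (p.coeff k) := rfl

def dvar : Derivation ℂ (Polynomial (MvPolynomial (Fin n) ℂ))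
    (Polynomial (MvPolynomial (Fin n) ℂ)) :=
  (Polynomial.derivative' (R := MvPolynomial (Fin n) ℂ)).restrictScalars ℂ

theorem dvar_apply (p : Polynomial (MvPolynomial (Fin n) ℂ)) :
    dvar p = Polynomial.derivative p := rfl

def linL (z : Fin n → ℂ) (u : ℂ) : MvPolynomial (Fin n) ℂ :=
  ∑ s, MvPolynomial.C ((u - z s)⁻¹) * MvPolynomial.X s

def bigL (z : Fin n → ℂ) (u : ℂ) : Polynomial (MvPolynomial (Fin n) ℂ) :=
  Polynomial.C (linL z u) + Polynomial.C (MvPolynomial.C u⁻¹) * Polynomial.X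

def bigP {I : Type*} [Fintype I] (z : Fin n → ℂ) (t : I → ℂ) :
    Polynomial (MvPolynomial (Fin n) ℂ) := ∏ i, bigL z (t i)

theorem dcoef_bigL (z : Fin n → ℂ) (u : ℂ) (s : Fin n) :
    dcoef s (bigL z u) = Polynomial.C (MvPolynomial.C ((u - z s)⁻¹)) := by
  ext1 k
  rw [dcoef_coeff]
  simp only [bigL, linL, Polynomial.coeff_add, Polynomial.coeff_C, Polynomial.coeff_C_mul,
    Polynomial.coeff_X]
  rcases k with _ | _ | k
  · simp [MvPolynomial.pderiv_X, Pi.single_apply]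
  · simp
  · simp

theorem bae_poly {I : Type*} [Fintype I] [DecidableEq I] (m : Fin n → ℕ) (z : Fin n → ℂ)
    (lam : ℂ) (t : I → ℂ) (ht : Function.Injective t) (ht0 : ∀ i, t i ≠ 0)
    (htz : ∀ i s, t i ≠ z s)
    (hbae : ∀ i, lam * (t i)⁻¹ + ∑ s, (m s : ℂ) * (t i - z s)⁻¹
      - ∑ j ∈ univ.erase i, 2 * (t i - t j)⁻¹ = 0) (k : ℕ) :
    Dop m ((bigP z t).coeff k)
      = MvPolynomial.C (-((k + 1 : ℂ) * (lam - k))) * (bigP z t).coeff (k + 1) := by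
  have main := bae_abstract (I := I) (S := Option (Fin n))
    (A := Polynomial (MvPolynomial (Fin n) ℂ))
    (fun s => s.elim dvar dcoef) (fun s => s.elim Polynomial.X fun s => Polynomial.C (MvPolynomial.X s))
    t (fun s => s.elim 0 z) (fun s => s.elim lam fun s => (m s : ℂ)) ht
    (by rintro i (_ | s); exacts [ht0 i, htz i s]) (fun i => bigL z (t i))
    (by
      intro i
      rw [Fintype.sum_option]
      simp only [Option.elim, bigL, linL, sub_zero, map_sum, map_mul, Algebra.smul_def]
      rw [add_comm]
      rfl)
    (by
      rintro (_ | s) i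
      · simp only [Option.elim, dvar_apply, bigL, sub_zero]
        simp
      · exact dcoef_bigL z (t i) s)
    (by
      intro i
      rw [Fintype.sum_option]
      simpa using hbae i)
  have mk := congrArg (fun p => Polynomial.coeff p k) main
  simp only [Fintype.sum_option, Option.elim] at mk
  change ((_ : Polynomial (MvPolynomial (Fin n) ℂ))).coeff k = _ at mk
  simp only [Polynomial.coeff_add, Polynomial.coeff_sub, Polynomial.coeff_smul, dvar_apply,
    Polynomial.finsetSum_coeff, Polynomial.coeff_C_mul, dcoef_coeff, Polynomial.coeff_zero] at mk
  have hX : (Polynomial.X * Polynomial.derivative (Polynomial.derivative (bigP z t))).coeff k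
      = (k : MvPolynomial (Fin n) ℂ) * ((k + 1) * (bigP z t).coeff (k + 1)) := by
    rcases k with _ | k
    · simp
    · rw [Polynomial.coeff_X_mul, Polynomial.coeff_derivative, Polynomial.coeff_derivative]
      push_cast
      ring
  have hfold : ∏ i, bigL z (t i) = bigP z t := rfl
  rw [hfold, hX, Polynomial.coeff_derivative] at mk
  have hD : Dop m ((bigP z t).coeff k) = ∑ s, ((m s : ℂ) • MvPolynomial.pderiv s ((bigP z t).coeff k)
      - MvPolynomial.X s * MvPolynomial.pderiv s (MvPolynomial.pderiv s ((bigP z t).coeff k))) := by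
    simp only [Dop, MvPolynomial.smul_eq_C_mul]
  rw [hD]
  rw [MvPolynomial.smul_eq_C_mul] at mk
  have hk : (MvPolynomial.C (k : ℂ) : MvPolynomial (Fin n) ℂ) = (k : MvPolynomial (Fin n) ℂ) := by
    simp
  simp only [MvPolynomial.C_neg, MvPolynomial.C_mul, MvPolynomial.C_sub, MvPolynomial.C_add,
    MvPolynomial.C_1, hk]
  linear_combination mk
end

section
variable {n : ℕ}

theorem bigP_coeff_zero {I : Type*} [Fintype I] (z : Fin n → ℂ) (t : I → ℂ) :
    (bigP z t).coeff 0 = ∏ i, ∑ s, MvPolynomial.C ((t i - z s)⁻¹) * MvPolynomial.X s := by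
  rw [Polynomial.coeff_zero_eq_eval_zero, bigP, Polynomial.eval_prod]
  refine Finset.prod_congr rfl fun i _ => ?_
  simp only [bigL, linL, Polynomial.eval_add, Polynomial.eval_mul, Polynomial.eval_C,
    Polynomial.eval_X, mul_zero, add_zero]

theorem bigL_natDegree (z : Fin n → ℂ) (u : ℂ) : (bigL z u).natDegree ≤ 1 := by
  unfold bigL
  rw [add_comm]
  exact Polynomial.natDegree_linear_le

theorem bigP_natDegree {I : Type*} [Fintype I] (z : Fin n → ℂ) (t : I → ℂ) :
    (bigP z t).natDegree ≤ Fintype.card I := by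
  unfold bigP
  refine (Polynomial.natDegree_prod_le _ _).trans ?_
  refine (Finset.sum_le_sum fun i _ => bigL_natDegree z (t i)).trans ?_
  simp

theorem bigP_top {I : Type*} [Fintype I] (z : Fin n → ℂ) (t : I → ℂ) :
    (bigP z t).coeff (Fintype.card I) = MvPolynomial.C (∏ i, (t i)⁻¹) := by
  have := Polynomial.coeff_prod_of_natDegree_le (s := (univ : Finset I))
    (fun i => bigL z (t i)) 1 (fun i _ => bigL_natDegree z (t i))
  rw [mul_one, Finset.card_univ] at this
  rw [bigP, this, map_prod]
  refine Finset.prod_congr rfl fun i _ => ?_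
  simp [bigL, Polynomial.coeff_C]

section
theorem e12_step {I : Type*} [Fintype I] [DecidableEq I] (m : Fin n → ℕ) (z : Fin n → ℂ)
    (lam : ℂ) (t : I → ℂ) (ht : Function.Injective t) (ht0 : ∀ i, t i ≠ 0)
    (htz : ∀ i s, t i ≠ z s)
    (hbae : ∀ i, lam * (t i)⁻¹ + ∑ s, (m s : ℂ) * (t i - z s)⁻¹
      - ∑ j ∈ univ.erase i, 2 * (t i - t j)⁻¹ = 0)
    (k : ℕ) : e12T m (Phi m ((bigP z t).coeff k))
    = (-((k + 1 : ℂ) * (lam - k))) • Phi m ((bigP z t).coeff (k + 1)) := by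
  rw [← Phi_Dop, bae_poly m z lam t ht ht0 htz hbae, ← MvPolynomial.smul_eq_C_mul, map_smul]

theorem e12_pow {I : Type*} [Fintype I] [DecidableEq I] (m : Fin n → ℕ) (z : Fin n → ℂ)
    (lam : ℂ) (t : I → ℂ) (ht : Function.Injective t) (ht0 : ∀ i, t i ≠ 0)
    (htz : ∀ i s, t i ≠ z s)
    (hbae : ∀ i, lam * (t i)⁻¹ + ∑ s, (m s : ℂ) * (t i - z s)⁻¹
      - ∑ j ∈ univ.erase i, 2 * (t i - t j)⁻¹ = 0)
    (k : ℕ) : (e12T m ^ k) (Phi m ((bigP z t).coeff 0))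
    = ((-1) ^ k * (k.factorial : ℂ) * ∏ j ∈ range k, (lam - j)) • Phi m ((bigP z t).coeff k) := by
  induction k with
  | zero => simp
  | succ k ih =>
    rw [pow_succ', Module.End.mul_apply, ih, map_smul, e12_step m z lam t ht ht0 htz hbae,
      smul_smul, Finset.prod_range_succ, Nat.factorial_succ]
    congr 1
    push_cast
    ring

theorem omega_ne_zero {I : Type*} [Fintype I] [DecidableEq I] (m : Fin n → ℕ) (z : Fin n → ℂ)
    (lam : ℂ) (t : I → ℂ) (ht : Function.Injective t) (ht0 : ∀ i, t i ≠ 0)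
    (htz : ∀ i s, t i ≠ z s)
    (hbae : ∀ i, lam * (t i)⁻¹ + ∑ s, (m s : ℂ) * (t i - z s)⁻¹
      - ∑ j ∈ univ.erase i, 2 * (t i - t j)⁻¹ = 0)
    (hlam : ∀ k : ℕ, lam ≠ k) : Phi m ((bigP z t).coeff 0) ≠ 0 := by
  intro h0
  have hall : ∀ k, Phi m ((bigP z t).coeff k) = 0 := by
    intro k
    have := e12_pow m z lam t ht ht0 htz hbae k
    rw [h0, map_zero] at this
    refine (smul_eq_zero.1 this.symm).resolve_left ?_
    refine mul_ne_zero (mul_ne_zero (by simp) (by exact_mod_cast k.factorial_ne_zero)) ?_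
    exact Finset.prod_ne_zero_iff.2 fun j _ => sub_ne_zero.2 (hlam j)
  have h1 := congrFun (hall (Fintype.card I)) (fun _ => 0)
  rw [bigP_top, Phi_apply] at h1
  have hF : toF m (fun _ => 0) = 0 := by ext; simp
  rw [hF] at h1
  have h2 : facF (0 : Fin n →₀ ℕ) = 1 := by simp [facF]
  rw [h2] at h1
  simp [Finset.prod_eq_zero_iff, ht0] at h1

theorem pOp_omega {I : Type*} [Fintype I] [DecidableEq I] (m : Fin n → ℕ) (z : Fin n → ℂ)
    (lam : ℂ) (t : I → ℂ) (ht : Function.Injective t) (ht0 : ∀ i, t i ≠ 0)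
    (htz : ∀ i s, t i ≠ z s)
    (hbae : ∀ i, lam * (t i)⁻¹ + ∑ s, (m s : ℂ) * (t i - z s)⁻¹
      - ∑ j ∈ univ.erase i, 2 * (t i - t j)⁻¹ = 0)
    (hlam : ∀ k : ℕ, lam ≠ k) (κ : ℂ)
    (hκ : κ = lam + (((∑ s, m s : ℕ) : ℂ) - 2 * (Fintype.card I : ℂ)))
    (hcard : Fintype.card I ≤ ∑ s, m s) :
    pOp m κ (Phi m ((bigP z t).coeff 0))
      = Phi m (∏ i, ∑ s, MvPolynomial.C ((t i)⁻¹ * (z s * (t i - z s)⁻¹)) * MvPolynomial.X s) := by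
  have hshift : ∀ k : ℕ, mulShift (fun idx : Idx m => ((k.factorial : ℂ))⁻¹ *
        ∏ j ∈ Finset.range k, (κ - ((wt m idx : ℤ) : ℂ) - (j : ℂ))⁻¹) id
        (Phi m ((bigP z t).coeff 0))
      = ((k.factorial : ℂ)⁻¹ * ∏ j ∈ range k, (lam - j)⁻¹) • Phi m ((bigP z t).coeff 0) := by
    intro k
    funext l
    simp only [mulShift, LinearMap.coe_mk, AddHom.coe_mk, id, Pi.smul_apply, smul_eq_mul]
    by_cases hl : ∑ s, (l s : ℕ) = Fintype.card I
    · have hw : κ - ((wt m l : ℤ) : ℂ) = lam := by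
        rw [hκ, ← hl]
        simp only [wt, Finset.sum_sub_distrib, ← Finset.mul_sum]
        push_cast
        ring
      rw [hw]
    · rw [bigP_coeff_zero, Phi_prod_lin_zero m (fun i s => (t i - z s)⁻¹) l hl]
      simp
  have hterm : ∀ k : ℕ, ((e21T m) ^ k * (e12T m) ^ k *
      mulShift (fun idx : Idx m => ((k.factorial : ℂ))⁻¹ *
        ∏ j ∈ Finset.range k, (κ - ((wt m idx : ℤ) : ℂ) - (j : ℂ))⁻¹) id)
        (Phi m ((bigP z t).coeff 0))
      = Phi m ((bigP z t).coeff k * (-sumX n) ^ k) := by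
    intro k
    rw [Module.End.mul_apply, hshift, Module.End.mul_apply, map_smul,
      e12_pow m z lam t ht ht0 htz hbae, smul_smul, map_smul, ← Phi_sumX_pow, ← map_smul]
    congr 1
    have hp : ∏ j ∈ range k, (lam - j) ≠ 0 :=
      Finset.prod_ne_zero_iff.2 fun j _ => sub_ne_zero.2 (hlam j)
    have hf : (k.factorial : ℂ) ≠ 0 := by exact_mod_cast k.factorial_ne_zero
    have hs : ((k.factorial : ℂ)⁻¹ * ∏ j ∈ range k, (lam - j)⁻¹) *
        ((-1) ^ k * (k.factorial : ℂ) * ∏ j ∈ range k, (lam - j)) = (-1) ^ k := by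
      rw [Finset.prod_inv_distrib]
      field_simp
    rw [hs, MvPolynomial.smul_eq_C_mul, neg_pow (sumX n)]
    simp only [map_pow, map_neg, map_one]
    ring
  unfold pOp
  rw [LinearMap.sum_apply, Finset.sum_congr rfl (fun k _ => hterm k), ← map_sum,
    ← Polynomial.eval_eq_sum_range' (Nat.lt_succ_of_le ((bigP_natDegree z t).trans hcard))]
  congr 1
  rw [bigP, Polynomial.eval_prod]
  refine Finset.prod_congr rfl fun i _ => ?_
  simp only [bigL, linL, sumX, Polynomial.eval_add, Polynomial.eval_mul, Polynomial.eval_C,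
    Polynomial.eval_X, mul_neg, Finset.mul_sum]
  rw [← Finset.sum_neg_distrib, ← Finset.sum_add_distrib]
  refine Finset.sum_congr rfl fun s _ => ?_
  have h1 := sub_ne_zero.2 (htz i s)
  have h0 := ht0 i
  have : (t i)⁻¹ * (z s * (t i - z s)⁻¹) = (t i - z s)⁻¹ - (t i)⁻¹ := by
    field_simp
    ring
  rw [this, MvPolynomial.C_sub]
  ring
end

theorem Phi_perm (m : Fin n → ℕ) (z : Fin n → ℂ) {I : Type*} [Fintype I] [DecidableEq I]
    (t : I → ℂ) (l : Idx m) (f : I → Fin n) (hf : fib f = toF m l) :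
    Phi m ((bigP z t).coeff 0) l = permA t (fun i => z (f i)) := by
  rw [bigP_coeff_zero, Phi_prod_lin m (fun i s => (t i - z s)⁻¹) l f hf]
  rfl

theorem Phi_perm2 (m : Fin n → ℕ) (z : Fin n → ℂ) {I : Type*} [Fintype I] [DecidableEq I]
    (t : I → ℂ) (l : Idx m) (f : I → Fin n) (hf : fib f = toF m l) :
    Phi m (∏ i, ∑ s, MvPolynomial.C ((t i)⁻¹ * (z s * (t i - z s)⁻¹)) * MvPolynomial.X s) l
      = (∏ i, (t i)⁻¹) * (permA t (fun i => z (f i)) * ∏ i, z (f i)) := by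
  rw [Phi_prod_lin m (fun i s => (t i)⁻¹ * (z s * (t i - z s)⁻¹)) l f hf]
  unfold permA Matrix.permanent
  rw [Finset.sum_mul, Finset.mul_sum]
  refine Finset.sum_congr rfl fun ρ _ => ?_
  rw [Finset.prod_mul_distrib, Finset.prod_mul_distrib, Equiv.prod_comp ρ (fun i => (t i)⁻¹)]
  simp only [Matrix.of_apply]
  ring
end

section
variable {n : ℕ}

theorem eval_der_prod {ι : Type*} (s : Finset ι) (f : ι → Polynomial ℂ) (x : ℂ)
    (hf : ∀ i ∈ s, (f i).eval x ≠ 0) :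
    (Polynomial.derivative (∏ i ∈ s, f i)).eval x
      = (∏ i ∈ s, f i).eval x *
        ∑ i ∈ s, (Polynomial.derivative (f i)).eval x * ((f i).eval x)⁻¹ := by
  classical
  induction s using Finset.induction_on with
  | empty => simp
  | insert a s ha ih =>
    have h1 := hf a (Finset.mem_insert_self _ _)
    rw [Finset.prod_insert ha, Finset.sum_insert ha, Polynomial.derivative_mul,
      Polynomial.eval_add, Polynomial.eval_mul, Polynomial.eval_mul, Polynomial.eval_mul,
      ih fun i hi => hf i (Finset.mem_insert_of_mem hi)]
    field_simp

theorem bae_of_wr {I J : Type*} [Fintype I] [DecidableEq I] [Fintype J] (m : Fin n → ℕ)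
    (z : Fin n → ℂ) (α β : ℂ) (hβ : β ≠ 0) (t : I → ℂ) (tt : J → ℂ)
    (ht : Function.Injective t)
    (htz : ∀ i s, t i ≠ z s)
    (hW : wrA α (rootPoly t) (rootPoly tt)
      = Polynomial.C β * ∏ s, (Polynomial.X - Polynomial.C (z s)) ^ (m s)) (i : I) :
    (α - 1) * (t i)⁻¹ + ∑ s, (m s : ℂ) * (t i - z s)⁻¹
      - ∑ j ∈ univ.erase i, 2 * (t i - t j)⁻¹ = 0 := by
  set g := ∏ k ∈ univ.erase i, (Polynomial.X - Polynomial.C (t k)) with hg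
  set Y := rootPoly tt with hY
  set Q := ∏ s, (Polynomial.X - Polynomial.C (z s)) ^ (m s) with hQ
  have hy : rootPoly t = (Polynomial.X - Polynomial.C (t i)) * g := rootPoly_erase t i
  rw [hy] at hW
  have hQ0 : Q.eval (t i) ≠ 0 := by
    rw [hQ, Polynomial.eval_prod]
    refine Finset.prod_ne_zero_iff.2 fun s _ => ?_
    simpa using pow_ne_zero _ (sub_ne_zero.2 (htz i s))
  have hQd : (Polynomial.derivative Q).eval (t i)
      = Q.eval (t i) * ∑ s, (m s : ℂ) * (t i - z s)⁻¹ := by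
    rw [hQ, eval_der_prod]
    · congr 1
      refine Finset.sum_congr rfl fun s _ => ?_
      have h := sub_ne_zero.2 (htz i s)
      rw [Polynomial.derivative_X_sub_C_pow]
      simp only [Polynomial.eval_mul, Polynomial.eval_pow, Polynomial.eval_sub, Polynomial.eval_X,
        Polynomial.eval_C, Polynomial.eval_natCast]
      rcases Nat.eq_zero_or_pos (m s) with h0 | h0
      · simp [h0]
      · obtain ⟨q, hq⟩ := Nat.exists_eq_succ_of_ne_zero h0.ne'
        rw [hq]
        simp only [Nat.succ_eq_add_one, Nat.add_sub_cancel, pow_succ]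
        field_simp
    · intro s _
      simpa using pow_ne_zero _ (sub_ne_zero.2 (htz i s))
  have hgd : (Polynomial.derivative g).eval (t i)
      = g.eval (t i) * ∑ j ∈ univ.erase i, (t i - t j)⁻¹ := by
    rw [hg, eval_der_prod]
    · simp
    · intro j hj
      have : t i ≠ t j := fun h => (Finset.ne_of_mem_erase hj) (ht h).symm
      simpa using sub_ne_zero.2 this
  have e0 := congrArg (Polynomial.eval (t i)) hW
  have e1 := congrArg (fun p => Polynomial.eval (t i) (Polynomial.derivative p)) hW
  simp only [wrA, Polynomial.derivative_mul, Polynomial.derivative_add, Polynomial.derivative_sub,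
    Polynomial.derivative_X, Polynomial.derivative_C, Polynomial.eval_add, Polynomial.eval_mul,
    Polynomial.eval_sub, Polynomial.eval_X, Polynomial.eval_C, Polynomial.derivative_one, Polynomial.derivative_zero,
    Polynomial.eval_zero, Polynomial.eval_one, hQd, hgd, sub_self] at e0 e1
  set S := ∑ j ∈ univ.erase i, (t i - t j)⁻¹ with hS
  set T := ∑ s, (m s : ℂ) * (t i - z s)⁻¹ with hT
  rw [← Finset.mul_sum, ← hS]
  have hne : t i * (g.eval (t i) * Y.eval (t i)) ≠ 0 := by
    intro h
    apply mul_ne_zero hβ hQ0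
    rw [← e0]
    linear_combination (-1) * h
  have ht0 : t i ≠ 0 := left_ne_zero_of_mul hne
  have hgY := right_ne_zero_of_mul hne
  have key : (g.eval (t i) * Y.eval (t i)) * ((α - 1) + t i * T - 2 * t i * S) = 0 := by
    linear_combination e1 - T * e0
  have := (mul_eq_zero.1 key).resolve_left hgY
  field_simp
  linear_combination this

theorem wrA_symm (α β : ℂ) (f g h : Polynomial ℂ) (hW : wrA α f g = Polynomial.C β * h) :
    wrA (-α) g f = Polynomial.C (-β) * h := by
  simp only [wrA, Polynomial.C_neg] at hW ⊢
  linear_combination (-1) * hW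

theorem rootPoly_fib {K : Type*} [Fintype K] (m : Fin n → ℕ) (z : Fin n → ℂ)
    (f : K → Fin n) (hf : ∀ s, fib f s = m s) :
    rootPoly (fun c => z (f c)) = ∏ s, (Polynomial.X - Polynomial.C (z s)) ^ (m s) := by
  unfold rootPoly
  rw [← Finset.prod_fiberwise univ f]
  refine Finset.prod_congr rfl fun s _ => ?_
  rw [Finset.prod_congr rfl (g := fun _ => Polynomial.X - Polynomial.C (z s)), Finset.prod_const,
    ← fib_apply, hf]
  intro i hi
  simp only
  rw [(Finset.mem_filter.1 hi).2]

theorem fib_sumElim {I J : Type*} [Fintype I] [Fintype J] (f : I → Fin n) (g : J → Fin n)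
    (s : Fin n) : fib (Sum.elim f g) s = fib f s + fib g s := by
  simp only [fib_apply, Finset.card_filter, Fintype.sum_sum_type]
  rfl

theorem main_thm (m : Fin n → ℕ) (z : Fin n → ℂ) (hz0 : ∀ s, z s ≠ 0)
    (m' b : ℕ) (hb : m' + b = ∑ s, m s) (α β : ℂ) (hα : ∀ k : ℤ, α ≠ k) (hβ : β ≠ 0)
    (t : Fin m' → ℂ) (tt : Fin b → ℂ) (ht : Function.Injective t) (htt : Function.Injective tt)
    (ht0 : ∀ i, t i ≠ 0) (htz : ∀ i s, t i ≠ z s) (httz : ∀ i s, tt i ≠ z s)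
    (hW : wrA α (rootPoly t) (rootPoly tt)
      = Polynomial.C β * ∏ s, (Polynomial.X - Polynomial.C (z s)) ^ (m s))
    (κ : ℂ) (hκ : κ = (α - 1) + (((∑ s, m s : ℕ) : ℂ) - 2 * (m' : ℂ))) :
    ∃ c : ℂ, c ≠ 0 ∧ Aop m κ (betheVec m z t) = c • betheVec m z tt := by
  have bt := bae_of_wr m z α β hβ t tt ht htz hW
  have btt := bae_of_wr m z (-α) (-β) (neg_ne_zero.2 hβ) tt t htt httz (wrA_symm _ _ _ _ _ hW)
  have hl1 : ∀ k : ℕ, α - 1 ≠ k := by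
    intro k h
    apply hα (k + 1)
    push_cast
    linear_combination h
  have hl2 : ∀ k : ℕ, -α - 1 ≠ k := by
    intro k h
    apply hα (-(k + 1))
    push_cast
    linear_combination -h
  have htt0 : ∀ i, tt i ≠ 0 := by
    intro i h
    have e := congrArg (Polynomial.eval 0) hW
    have h1 : (rootPoly tt).eval 0 = 0 := by
      rw [rootPoly_erase tt i, h]; simp
    simp only [wrA, Polynomial.eval_add, Polynomial.eval_mul, Polynomial.eval_X, h1, mul_zero,
      zero_mul, add_zero, Polynomial.eval_C, Polynomial.eval_prod, Polynomial.eval_pow,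
      Polynomial.eval_sub, zero_sub] at e
    have := (mul_eq_zero.1 e.symm).resolve_left hβ
    rw [Finset.prod_eq_zero_iff] at this
    obtain ⟨s, -, hs⟩ := this
    exact hz0 s (neg_eq_zero.1 (eq_zero_of_pow_eq_zero hs))
  have w1 : betheVec m z t = Phi m ((bigP z t).coeff 0) := by
    rw [betheVec_eq_Phi, bigP_coeff_zero]
  have w2 : betheVec m z tt = Phi m ((bigP z tt).coeff 0) := by
    rw [betheVec_eq_Phi, bigP_coeff_zero]
  have n1 := omega_ne_zero m z (α - 1) t ht ht0 htz bt hl1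
  have n2 := omega_ne_zero m z (-α - 1) tt htt htt0 httz btt hl2
  have hp := pOp_omega m z (α - 1) t ht ht0 htz bt hl1 κ (by rw [hκ, Fintype.card_fin])
    (by rw [Fintype.card_fin]; omega)
  let rv : Idx m → Idx m := fun l s => (l s).rev
  have hrv : ∀ l s, ((rv l s : ℕ)) + (l s : ℕ) = m s := by
    intro l s
    simp only [rv, Fin.val_rev]
    have := (l s).2
    omega
  have hrvs : ∀ l, ∑ s, (rv l s : ℕ) + ∑ s, (l s : ℕ) = ∑ s, m s := by
    intro l
    rw [← Finset.sum_add_distrib]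
    exact Finset.sum_congr rfl fun s _ => hrv l s
  -- the basic duality relation
  have dual : ∀ l l0 : Idx m, ∑ s, (l s : ℕ) = m' → ∑ s, (l0 s : ℕ) = m' →
      Phi m (∏ i, ∑ s, MvPolynomial.C ((t i)⁻¹ * (z s * (t i - z s)⁻¹)) * MvPolynomial.X s) l
        * Phi m ((bigP z tt).coeff 0) (rv l0)
      = Phi m (∏ i, ∑ s, MvPolynomial.C ((t i)⁻¹ * (z s * (t i - z s)⁻¹)) * MvPolynomial.X s) l0
        * Phi m ((bigP z tt).coeff 0) (rv l) := by
    intro l l0 hl hl0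
    obtain ⟨f, hf, -⟩ := exists_colour m m' l hl
    obtain ⟨f0, hf0, -⟩ := exists_colour m m' l0 hl0
    obtain ⟨g, hg, -⟩ := exists_colour m b (rv l) (by have := hrvs l; omega)
    obtain ⟨g0, hg0, -⟩ := exists_colour m b (rv l0) (by have := hrvs l0; omega)
    have hfg : ∀ s, fib (Sum.elim f g) s = m s := by
      intro s
      rw [fib_sumElim, hf, hg, ← hrv l s, add_comm]; rfl
    have hfg0 : ∀ s, fib (Sum.elim f0 g0) s = m s := by
      intro s
      rw [fib_sumElim, hf0, hg0, ← hrv l0 s, add_comm]; rfl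
    obtain ⟨π, hπ⟩ := exists_perm_of_card (Sum.elim f g) (Sum.elim f0 g0)
      (fun s => (hfg s).trans (hfg0 s).symm)
    have D := dual_general α β hβ t tt (fun c => z (Sum.elim f0 g0 c)) (fun c => hz0 _) ht htt
      (fun i c => htz i _) (fun i c => httz i _)
      (by rw [rootPoly_fib m z _ hfg0]; exact hW) π 1
    have hπl : ∀ k, Sum.elim f0 g0 (π (Sum.inl k)) = f k := fun k => (congrFun hπ (Sum.inl k)).symm
    have hπr : ∀ k, Sum.elim f0 g0 (π (Sum.inr k)) = g k := fun k => (congrFun hπ (Sum.inr k)).symm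
    simp only [hπl, hπr, Equiv.Perm.coe_one, id, Sum.elim_inl, Sum.elim_inr] at D
    rw [Phi_perm2 m z t l f hf, Phi_perm2 m z t l0 f0 hf0, Phi_perm m z tt _ g hg,
      Phi_perm m z tt _ g0 hg0]
    linear_combination (∏ i, (t i)⁻¹) * D
  -- choose a nonzero coordinate
  obtain ⟨x0, hx0⟩ := Function.ne_iff.1 n2
  have hzero : ∀ l : Idx m, ∑ s, (l s : ℕ) ≠ b → Phi m ((bigP z tt).coeff 0) l = 0 := by
    intro l hl
    rw [bigP_coeff_zero]
    exact Phi_prod_lin_zero m (fun i s => (tt i - z s)⁻¹) l (by simpa using hl)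
  have hzero2 : ∀ l : Idx m, ∑ s, (l s : ℕ) ≠ m' → Phi m (∏ i, ∑ s, MvPolynomial.C ((t i)⁻¹ * (z s * (t i - z s)⁻¹)) * MvPolynomial.X s) l = 0 := by
    intro l hl
    exact Phi_prod_lin_zero m (fun i s => (t i)⁻¹ * (z s * (t i - z s)⁻¹)) l (by simpa using hl)
  have hx0b : ∑ s, (x0 s : ℕ) = b := by
    by_contra h
    exact hx0 (hzero x0 h)
  have hrr : ∀ l, rv (rv l) = l := fun l => funext fun s => Fin.rev_rev _
  have hl0 : ∑ s, (rv x0 s : ℕ) = m' := by have := hrvs x0; omega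
  set F := Phi m (∏ i, ∑ s, MvPolynomial.C ((t i)⁻¹ * (z s * (t i - z s)⁻¹)) * MvPolynomial.X s)
    with hF
  set W := Phi m ((bigP z tt).coeff 0) with hWdef
  have hx0' : W x0 ≠ 0 := hx0
  have hrel : ∀ l, F l = (F (rv x0) / W x0) * W (rv l) := by
    intro l
    by_cases hl : ∑ s, (l s : ℕ) = m'
    · have := dual l (rv x0) hl hl0
      rw [hrr] at this
      field_simp
      linear_combination this
    · rw [hzero2 l hl, hzero (rv l) (by have := hrvs l; omega), mul_zero]
  have hFne : F (rv x0) ≠ 0 := by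
    intro h
    apply n1
    funext l
    by_cases hl : ∑ s, (l s : ℕ) = m'
    · obtain ⟨f, hf, -⟩ := exists_colour m m' l hl
      have h1 := hrel l
      rw [h, hF, Phi_perm2 m z t l f hf, zero_div, zero_mul] at h1
      rw [Phi_perm m z t l f hf]
      have h2 := (mul_eq_zero.1 h1).resolve_left
        (Finset.prod_ne_zero_iff.2 fun i _ => inv_ne_zero (ht0 i))
      exact (mul_eq_zero.1 h2).resolve_right (Finset.prod_ne_zero_iff.2 fun i _ => hz0 _)
    · rw [bigP_coeff_zero]
      exact Phi_prod_lin_zero m (fun i s => (t i - z s)⁻¹) l (by simpa using hl)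
  refine ⟨(-1) ^ m' * (F (rv x0) / W x0), mul_ne_zero (by simp) (div_ne_zero hFne hx0'), ?_⟩
  rw [w1, w2, Aop, Module.End.mul_apply, hp]
  funext l
  simp only [sigmaOp, mulShift, LinearMap.coe_mk, AddHom.coe_mk, Pi.smul_apply, smul_eq_mul]
  change _ * F (rv l) = _ * W l
  rw [hrel (rv l), hrr]
  by_cases hl : ∑ s, (l s : ℕ) = b
  · rw [Finset.prod_pow_eq_pow_sum]
    have : ∑ s, (m s - (l s : ℕ)) = m' := by
      have h1 : ∑ s, (m s - (l s : ℕ)) = ∑ s, (rv l s : ℕ) :=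
        Finset.sum_congr rfl fun s _ => by have := hrv l s; omega
      have h2 := hrvs l
      omega
    rw [this]
    ring
  · rw [hzero l hl]
    ring
end

open Polynomial in
/-- Theorem 7.5 of the paper; Theorem 5.7 of [MV2].  Assume `μ ∉ M/2 + ℤ`,
`ν = M - 2m'`.  Let `t⁰` solve the Bethe ansatz equations for `(z; μ; V[ν])` and let
`ỹ(X) = Π_i (X - t̃⁰_i)` be the monic polynomial of degree `M - m'` satisfying the Wronskian
identity; assume the `t̃⁰_i` are pairwise distinct and `ỹ(z_s) ≠ 0`.  Then
`𝒜(μ + ν/2 - 1) ω(t⁰, z) = c ω(t̃⁰, z)` for some nonzero constant `c`. -/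
theorem statement13
    (n : ℕ) (hn : 1 < n) (m : Fin n → ℕ) (hm : ∀ s, 0 < m s)
    (M : ℕ) (hM : M = ∑ s, m s)
    (z : Fin n → ℂ) (hz0 : ∀ s, z s ≠ 0) (hz : Function.Injective z)
    (μ : ℂ) (hμ : ∀ k : ℤ, μ ≠ (M : ℂ) / 2 + (k : ℂ))
    (m' : ℕ) (hm' : m' ≤ M) (ν : ℂ) (hν : ν = (M : ℂ) - 2 * (m' : ℂ))
    (t : Fin m' → ℂ) (ht : BAE m z μ t)
    (tt : Fin (M - m') → ℂ) (httinj : Function.Injective tt)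
    (httz : ∀ i s, tt i ≠ z s)
    (hid : C (μ - ν / 2) * ((∏ i, (X - C (t i))) * ∏ i, (X - C (tt i)))
          + X * ((∏ i, (X - C (t i))) * derivative (∏ i, (X - C (tt i)))
              - derivative (∏ i, (X - C (t i))) * ∏ i, (X - C (tt i)))
        = C (μ + ν / 2) * ∏ s, (X - C (z s)) ^ (m s)) :
    ∃ c : ℂ, c ≠ 0 ∧
      Aop m (μ + ν / 2 - 1) (betheVec m z t) = c • betheVec m z tt := by
  have hMc : ((∑ s, m s : ℕ) : ℂ) = (M : ℂ) := by rw [hM]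
  refine main_thm m z hz0 m' (M - m') (by omega) (μ - ν / 2) (μ + ν / 2) ?_ ?_ t tt ht.1 httinj
    ht.2.1 ht.2.2.1 httz hid _ ?_
  · intro k h
    apply hμ (k - m')
    rw [hν] at h
    push_cast
    linear_combination h
  · intro h
    apply hμ (m' - M)
    rw [hν] at h
    push_cast
    linear_combination h
  · rw [hMc, hν]
    ring


end
end Paper
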